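/- Let p be an odd prime, d ≥ 1, and n = p^d. Let a₀, …, a_{n−1} ∈ ℝ³ be nonzero, pairwise linearly independent vectors defining a complexified-real central arrangement of n planes in ℂ³ with Milnor fiber F and basepoint z₀ ∈ F. Suppose that: (i) for every i < n there is a nonzero v ∈ ℂ³ with ℓᵢ(v) = 0 and p dividing m_v (every line of the arrangement contains a multiple point of multiplicity divisible by p); (ii) there exist j < n and a nonzero v₀ ∈ ℂ³ with ℓⱼ(v₀) = 0 such that every nonzero w ∈ ℂ³ with ℓⱼ(w) = 0 and p dividing m_w is a complex scalar multiple of v₀ (the line ker ℓⱼ has only one multiple point of multiplicity divisible by p); and (iii) there is a nonzero u ∈ ℂ³ with ℓⱼ(u) = 0, m_u ≥ 2, and u not a complex scalar multiple of v₀. Then Ab π₁(F, z₀) is isomorphic to the free abelian group ℤ^{p^d − 1}; in particular the first Betti number of F is minimal and H₁(F;ℤ) is torsion-free. -/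

import Mathlib

/-!
The complement of the arrangement is covered by star-shaped sets indexed by the chambers of the
real arrangement. Hence its fundamental group is generated by loops `γ(C, x)`, with `C` and `x`
chambers: move the real part from a base chamber to `x` with imaginary part in a fixed chamber
`C₀`, and back with imaginary part in `C`. The only relations needed are
`γ(C, x) γ(D, x)⁻¹ = γ(C, y) γ(D, y)⁻¹` when no plane separates both `C` from `D` and `x` from `y`.
The fundamental group of the Milnor fiber is the kernel `K` of the total winding number, the
degree.

Modulo `⁅K, K⁆`, elements of degree zero commute, so elements that commute with an element `c` of
degree prime to `n = p ^ d` commute with each other as soon as some element of degree `±n` is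
central. The full twist around a point of multiplicity `m` commutes with the loops near that point
and has degree `±m`, and the full twist around the origin is such a central element. Let `t` be a
meridian of the plane `j`. Walking along a line in that plane which avoids the only point of
multiplicity divisible by `p` shows that `t` commutes with the loops of every chamber adjacent to
the line, in particular with chambers on both sides of each plane not parallel to the line. The
remaining planes meet in the direction `r` of the line; such a plane is crossed at its intersection
`q` with a plane transverse to `r`, by local commutation if `p` does not divide the multiplicity
of `q`, and otherwise by means of an element whose degree is, up to sign, that multiplicity minus
one. Thus `π₁ / ⁅K, K⁆` is commutative, the winding numbers identify it with `ℤⁿ`, and the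
abelianization of `K` becomes the lattice of vectors with coordinate sum zero.
-/

namespace RealArrangement

open Set
open scoped Topology unitInterval Matrix

/-! ### Chambers of a real arrangement -/

section Chambers

variable {ι κ : Type*} [Fintype κ] {a : ι → κ → ℝ}

/-- A chamber of the arrangement of hyperplanes `(a i)ᗮ`, represented by any one of its points;
only the signs of that point matter. -/
def Chamber (a : ι → κ → ℝ) : Type _ := {x : κ → ℝ // ∀ i, a i ⬝ᵥ x ≠ 0}

namespace Chamber

/-- The sign vector of a chamber. -/
noncomputable def sign (C : Chamber a) (i : ι) : SignType := SignType.sign (a i ⬝ᵥ C.1)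

theorem sign_ne_zero (C : Chamber a) (i : ι) : C.sign i ≠ 0 := _root_.sign_ne_zero.mpr (C.2 i)

instance : InvolutiveNeg (Chamber a) where
  neg C := ⟨-C.1, fun i => by simpa using C.2 i⟩
  neg_neg C := Subtype.ext (neg_neg C.1)

theorem sign_neg (C : Chamber a) (i : ι) : (-C).sign i = -C.sign i := by
  change SignType.sign (a i ⬝ᵥ -C.1) = _
  rw [dotProduct_neg, Left.sign_neg]; rfl

/-- The set of hyperplanes separating two chambers. -/
def sep (C D : Chamber a) : Set ι := {i | C.sign i ≠ D.sign i}

theorem mem_sep {C D : Chamber a} {i : ι} : i ∈ C.sep D ↔ C.sign i ≠ D.sign i := Iff.rfl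

theorem notMem_sep {C D : Chamber a} {i : ι} : i ∉ C.sep D ↔ C.sign i = D.sign i := not_not

theorem sep_comm (C D : Chamber a) : C.sep D = D.sep C := by
  ext i; exact ne_comm

theorem sign_eq_neg_of_mem_sep {C D : Chamber a} {i : ι} (h : i ∈ C.sep D) :
    C.sign i = -D.sign i := by
  have key : ∀ s t : SignType, s ≠ 0 → t ≠ 0 → s ≠ t → s = -t := by decide
  exact key _ _ (C.sign_ne_zero i) (D.sign_ne_zero i) h

theorem sign_eq_of_mem_sep {C D E : Chamber a} {i : ι} (hC : i ∈ C.sep E) (hD : i ∈ D.sep E) :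
    C.sign i = D.sign i :=
  (sign_eq_neg_of_mem_sep hC).trans (sign_eq_neg_of_mem_sep hD).symm

theorem sep_neg_self (C : Chamber a) : C.sep (-C) = univ := by
  have key : ∀ s : SignType, s ≠ 0 → s ≠ -s := by decide
  ext i
  simpa [mem_sep, sign_neg] using key _ (C.sign_ne_zero i)

theorem disjoint_sep_sep_neg (C D : Chamber a) : Disjoint (C.sep D) (D.sep (-C)) := by
  refine disjoint_left.mpr fun i hi => ?_
  rw [notMem_sep, sign_neg, sign_eq_neg_of_mem_sep hi, neg_neg]

theorem disjoint_sep_of_subset_singleton {C D x y : Chamber a} {i : ι} (hCD : C.sep D ⊆ {i})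
    (hxy : i ∉ x.sep y) : Disjoint (C.sep D) (x.sep y) :=
  (disjoint_singleton_left.mpr hxy).mono_left hCD

/-- The chambers whose closure contains the point `P`. -/
def starAt (P : κ → ℝ) : Set (Chamber a) :=
  {C | ∀ i, a i ⬝ᵥ P ≠ 0 → C.sign i = SignType.sign (a i ⬝ᵥ P)}

theorem sep_subset_of_mem_starAt {P : κ → ℝ} {C D : Chamber a} (hC : C ∈ starAt P)
    (hD : D ∈ starAt P) : C.sep D ⊆ {i | a i ⬝ᵥ P = 0} := fun i hi => by
  by_contra h
  exact hi ((hC i h).trans (hD i h).symm)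

theorem dotProduct_ne_zero_of_mem_segment {P Q R : κ → ℝ} (hR : R ∈ segment ℝ P Q) {k l : ι}
    (hP : a k ⬝ᵥ P ≠ 0) (hPQ : (a k ⬝ᵥ P) * (a l ⬝ᵥ Q) ≠ (a l ⬝ᵥ P) * (a k ⬝ᵥ Q))
    (hk : a k ⬝ᵥ R = 0) : a l ⬝ᵥ R ≠ 0 := by
  obtain ⟨s, t, -, -, hst, rfl⟩ := hR
  simp only [dotProduct_add, dotProduct_smul, smul_eq_mul] at hk ⊢
  intro hl
  have hmul : t * ((a k ⬝ᵥ P) * (a l ⬝ᵥ Q) - (a l ⬝ᵥ P) * (a k ⬝ᵥ Q)) = 0 := by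
    linear_combination (a k ⬝ᵥ P) * hl - (a l ⬝ᵥ P) * hk
  rcases mul_eq_zero.mp hmul with rfl | h
  · exact hP (by linear_combination hk - (a k ⬝ᵥ P) * hst)
  · exact hPQ (sub_eq_zero.mp h)

theorem mem_sep_of_mem_segment {C D : Chamber a} {R : κ → ℝ} (hR : R ∈ segment ℝ C.1 D.1)
    {k : ι} (hk : a k ⬝ᵥ R = 0) : k ∈ C.sep D := by
  obtain ⟨s, t, hs, ht, hst, rfl⟩ := hR
  simp only [dotProduct_add, dotProduct_smul, smul_eq_mul] at hk
  intro (h : SignType.sign _ = SignType.sign _)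
  rcases lt_or_gt_of_ne (C.2 k) with hC | hC
  · have hD : a k ⬝ᵥ D.1 < 0 := sign_eq_neg_one_iff.mp (h ▸ _root_.sign_neg hC)
    exact (convex_Iio (0 : ℝ) hC hD hs ht hst).ne hk
  · have hD : 0 < a k ⬝ᵥ D.1 := sign_eq_one_iff.mp (h ▸ sign_pos hC)
    exact (convex_Ioi (0 : ℝ) hC hD hs ht hst).ne' hk

end Chamber

open Chamber

theorem eventually_sign_add_mul (p q : ℝ) :
    ∀ᶠ ε : ℝ in 𝓝[>] 0, SignType.sign (p + ε * q) =
      if p = 0 then SignType.sign q else SignType.sign p := by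
  by_cases hp : p = 0
  · filter_upwards [self_mem_nhdsWithin] with ε (hε : 0 < ε)
    simp [hp, sign_mul, sign_pos hε]
  · have hcont : ContinuousAt (fun ε : ℝ => SignType.sign (p + ε * q)) 0 :=
      ContinuousAt.comp (g := SignType.sign) (f := fun ε : ℝ => p + ε * q)
        (by simpa using continuousAt_sign_of_ne_zero hp) (by fun_prop)
    have heq : ∀ᶠ ε : ℝ in 𝓝 0, SignType.sign (p + ε * q) = SignType.sign (p + 0 * q) := by
      simpa [ContinuousAt, nhds_discrete] using hcont
    simpa [hp] using heq.filter_mono nhdsWithin_le_nhds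

variable [Finite ι]

theorem exists_forall_dotProduct_ne_zero (ha : ∀ i, a i ≠ 0) : ∃ v : κ → ℝ, ∀ i, a i ⬝ᵥ v ≠ 0 :=
  Module.Dual.exists_forall_ne_zero_of_forall_exists (fun i => dotProductBilin ℝ ℝ (a i))
    fun i => ⟨a i, by simpa using ha i⟩

theorem exists_compose (P : κ → ℝ) (C : Chamber a) :
    ∃ D : Chamber a, ∀ i, D.sign i =
      if a i ⬝ᵥ P = 0 then C.sign i else SignType.sign (a i ⬝ᵥ P) := by
  obtain ⟨ε, hε⟩ := (Filter.eventually_all.mpr fun i =>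
    eventually_sign_add_mul (a i ⬝ᵥ P) (a i ⬝ᵥ C.1)).exists
  have hsign : ∀ i, SignType.sign (a i ⬝ᵥ (P + ε • C.1)) =
      if a i ⬝ᵥ P = 0 then C.sign i else SignType.sign (a i ⬝ᵥ P) := fun i => by
    rw [dotProduct_add, dotProduct_smul, smul_eq_mul, hε i]; rfl
  refine ⟨⟨P + ε • C.1, fun i h0 => ?_⟩, hsign⟩
  have := hsign i
  rw [h0, sign_zero] at this
  split_ifs at this with h
  · exact C.sign_ne_zero i this.symm
  · exact h (sign_eq_zero_iff.mp this.symm)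

namespace Chamber

/-- The composition `P ∘ C` of oriented matroid theory: the chamber reached from `P` by an
infinitesimal step towards `C`. -/
noncomputable def compose (P : κ → ℝ) (C : Chamber a) : Chamber a := (exists_compose P C).choose

theorem sign_compose (P : κ → ℝ) (C : Chamber a) (i : ι) : (compose P C).sign i =
    if a i ⬝ᵥ P = 0 then C.sign i else SignType.sign (a i ⬝ᵥ P) :=
  (exists_compose P C).choose_spec i

theorem sign_compose_of_eq_zero {P : κ → ℝ} {i : ι} (h : a i ⬝ᵥ P = 0) (C : Chamber a) :
    (compose P C).sign i = C.sign i := by rw [sign_compose, if_pos h]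

theorem sign_compose_of_ne_zero {P : κ → ℝ} {i : ι} (h : a i ⬝ᵥ P ≠ 0) (C : Chamber a) :
    (compose P C).sign i = SignType.sign (a i ⬝ᵥ P) := by rw [sign_compose, if_neg h]

theorem compose_mem_starAt (P : κ → ℝ) (C : Chamber a) : compose P C ∈ starAt P :=
  fun _ hi => sign_compose_of_ne_zero hi C

theorem sign_compose_of_mem_starAt {P : κ → ℝ} {C : Chamber a} (hC : C ∈ starAt P) (i : ι) :
    (compose P C).sign i = C.sign i := by
  by_cases h : a i ⬝ᵥ P = 0
  · exact sign_compose_of_eq_zero h C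
  · rw [sign_compose_of_ne_zero h, hC i h]

theorem sep_compose (P : κ → ℝ) (C D : Chamber a) :
    (compose P C).sep (compose P D) = {i | a i ⬝ᵥ P = 0} ∩ C.sep D := by
  ext i
  by_cases h : a i ⬝ᵥ P = 0 <;> simp [mem_sep, sign_compose, h]

theorem sep_compose_neg (P : κ → ℝ) (C : Chamber a) :
    (compose P C).sep (compose (-P) C) = {i | a i ⬝ᵥ P ≠ 0} := by
  have key : ∀ s : SignType, s ≠ 0 → s ≠ -s := by decide
  ext i
  by_cases h : a i ⬝ᵥ P = 0
  · simp [mem_sep, sign_compose, h]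
  · simp [mem_sep, sign_compose, h, Left.sign_neg, key]

theorem eventually_starAt_subset {X : Type*} [TopologicalSpace X] {P : X → κ → ℝ}
    (hP : Continuous P) (t : X) :
    ∀ᶠ s in 𝓝 t, (starAt (P s) : Set (Chamber a)) ⊆ starAt (P t) := by
  have hsign : ∀ᶠ s in 𝓝 t, ∀ i, a i ⬝ᵥ P t ≠ 0 →
      SignType.sign (a i ⬝ᵥ P s) = SignType.sign (a i ⬝ᵥ P t) := by
    refine Filter.eventually_all.mpr fun i => Filter.eventually_imp_distrib_left.mpr fun hi => ?_
    have : ContinuousAt (fun s => SignType.sign (a i ⬝ᵥ P s)) t :=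
      ContinuousAt.comp (g := SignType.sign) (f := fun s => a i ⬝ᵥ P s)
        (continuousAt_sign_of_ne_zero hi) (by fun_prop)
    simpa [ContinuousAt, nhds_discrete] using this
  filter_upwards [hsign] with s hs C hC i hi
  rw [← hs i hi]
  refine hC i fun h0 => hi ?_
  simpa [h0, eq_comm (a := (0 : SignType))] using hs i hi

theorem segment_induction {Pr : Chamber a → Prop} {P Q : κ → ℝ}
    (step : ∀ R ∈ segment ℝ P Q, ∀ C ∈ starAt R, ∀ D ∈ starAt R, Pr C → Pr D) {C D : Chamber a}
    (hC : C ∈ starAt P) (hD : D ∈ starAt Q) (h : Pr C) : Pr D := by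
  let R : I → κ → ℝ := fun t => AffineMap.lineMap P Q (t : ℝ)
  have hR : ∀ t, R t ∈ segment ℝ P Q := fun t =>
    segment_eq_image_lineMap ℝ P Q ▸ mem_image_of_mem _ t.2
  have hconst : IsLocallyConstant fun t => ∀ E ∈ starAt (R t), Pr E := by
    refine (IsLocallyConstant.iff_eventually_eq _).mpr fun t => ?_
    filter_upwards [eventually_starAt_subset (a := a) (P := R)
      (AffineMap.lineMap_continuous.comp continuous_subtype_val) t] with s hs
    refine propext ⟨fun hPr E hE => ?_, fun hPr E hE => hPr E (hs hE)⟩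
    have hmem := compose_mem_starAt (R s) E
    exact step _ (hR t) _ (hs hmem) E hE (hPr _ hmem)
  have h0 : ∀ E ∈ starAt (R 0), Pr E := fun E hE =>
    step _ (hR 0) C (by simpa [R] using hC) E hE h
  rw [hconst.apply_eq_of_preconnectedSpace 0 1] at h0
  exact h0 D (by simpa [R] using hD)

theorem exists_sign_eq_and_dotProduct_ne_zero {ι' : Type*} [Finite ι'] {b : ι' → κ → ℝ}
    (hb : ∀ q, b q ≠ 0) (D : Chamber a) :
    ∃ D' : Chamber a, (∀ i, D'.sign i = D.sign i) ∧ ∀ q, b q ⬝ᵥ D'.1 ≠ 0 := by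
  obtain ⟨v, hv⟩ := exists_forall_dotProduct_ne_zero hb
  obtain ⟨ε, hε, hε'⟩ := ((Filter.eventually_all.mpr fun i =>
    eventually_sign_add_mul (a i ⬝ᵥ D.1) (a i ⬝ᵥ v)).and (Filter.eventually_all.mpr fun q =>
    eventually_sign_add_mul (b q ⬝ᵥ D.1) (b q ⬝ᵥ v))).exists
  have hsign : ∀ i, SignType.sign (a i ⬝ᵥ (D.1 + ε • v)) = D.sign i := fun i => by
    rw [dotProduct_add, dotProduct_smul, smul_eq_mul, hε i, if_neg (D.2 i)]; rfl
  refine ⟨⟨D.1 + ε • v, fun i h0 => D.sign_ne_zero i ?_⟩, hsign, fun q h0 => ?_⟩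
  · rw [← hsign, h0, sign_zero]
  · have := hε' q
    rw [← smul_eq_mul, ← dotProduct_smul, ← dotProduct_add, h0, sign_zero] at this
    split_ifs at this with h
    · exact hv q (sign_eq_zero_iff.mp this.symm)
    · exact h (sign_eq_zero_iff.mp this.symm)

/-- Walk from `C` to a small perturbation of `D`, chosen so that no two hyperplanes are crossed
simultaneously. -/
theorem gallery_induction (hind : Pairwise fun i j => LinearIndependent ℝ ![a i, a j])
    {Pr : Chamber a → Prop} {C D : Chamber a}
    (step : ∀ E E' : Chamber a, (E.sep E').Subsingleton → E.sep E' ⊆ C.sep D → Pr E → Pr E')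
    (h : Pr C) : Pr D := by
  let b : {q : ι × ι // q.1 ≠ q.2} → κ → ℝ := fun q =>
    (a q.1.1 ⬝ᵥ C.1) • a q.1.2 - (a q.1.2 ⬝ᵥ C.1) • a q.1.1
  have hb : ∀ q, b q ≠ 0 := by
    rintro ⟨⟨k, l⟩, hkl⟩ h0
    have := LinearIndependent.pair_iff.mp (hind hkl) (-(a l ⬝ᵥ C.1)) (a k ⬝ᵥ C.1)
      (by rw [neg_smul, ← h0]; simp only [b]; abel)
    exact C.2 k this.2
  obtain ⟨D', hD', hbD'⟩ := exists_sign_eq_and_dotProduct_ne_zero hb D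
  refine segment_induction (P := C.1) (Q := D'.1) (fun R hR E hE E' hE' => ?_)
    (fun i _ => rfl) (fun i _ => (hD' i).symm) h
  have hsub := sep_subset_of_mem_starAt hE hE'
  refine step E E' (fun k hk l hl => ?_) fun k hk => ?_
  · by_contra hkl
    refine dotProduct_ne_zero_of_mem_segment hR (C.2 k) (fun heq => hbD' ⟨(k, l), hkl⟩ ?_)
      (hsub hk) (hsub hl)
    simp only [b, sub_dotProduct, smul_dotProduct, smul_eq_mul, heq, sub_self]
  · have := mem_sep_of_mem_segment hR (hsub hk)
    rwa [mem_sep, hD' k] at this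

/-- Project a general vector `v` orthogonally to the hyperplane `k`. -/
theorem exists_dotProduct_eq_zero_and_ne_zero
    (hind : Pairwise fun i j => LinearIndependent ℝ ![a i, a j]) (k : ι) :
    ∃ q : κ → ℝ, a k ⬝ᵥ q = 0 ∧ ∀ i ≠ k, a i ⬝ᵥ q ≠ 0 := by
  let b : {i // i ≠ k} → κ → ℝ := fun i => (a k ⬝ᵥ a k) • a i.1 - (a i.1 ⬝ᵥ a k) • a k
  have hb : ∀ i, b i ≠ 0 := by
    rintro ⟨i, hi⟩ h0
    have hik := LinearIndependent.pair_iff.mp (hind hi) (a k ⬝ᵥ a k) (-(a i ⬝ᵥ a k))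
      (by rw [neg_smul, ← sub_eq_add_neg]; exact h0)
    exact (hind hi).ne_zero 1 (dotProduct_self_eq_zero.mp hik.1)
  obtain ⟨v, hv⟩ := exists_forall_dotProduct_ne_zero hb
  refine ⟨(a k ⬝ᵥ a k) • v - (a k ⬝ᵥ v) • a k, ?_, fun i hi h0 => hv ⟨i, hi⟩ ?_⟩
  · simp only [dotProduct_sub, dotProduct_smul, smul_eq_mul]; ring
  · simp only [dotProduct_sub, dotProduct_smul, sub_dotProduct, smul_dotProduct, smul_eq_mul, b]
      at h0 ⊢
    linear_combination h0

theorem exists_sep_eq_singleton (hind : Pairwise fun i j => LinearIndependent ℝ ![a i, a j])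
    (k : ι) (C : Chamber a) : ∃ D D' : Chamber a, D.sign k = C.sign k ∧ D.sep D' = {k} := by
  obtain ⟨q, hk, hne⟩ := exists_dotProduct_eq_zero_and_ne_zero hind k
  refine ⟨compose q C, compose q (-C), sign_compose_of_eq_zero hk C, ?_⟩
  rw [sep_compose, sep_neg_self, inter_univ]
  exact Set.ext fun i => ⟨fun hi => not_not.mp fun hik => hne i hik hi, fun hi => hi ▸ hk⟩

end Chamber

end Chambers

open Chamber

/-! ### Loops indexed by pairs of chambers -/

section Degree

theorem isCoprime_natCast_pow {p m : ℕ} (hp : p.Prime) (h : ¬p ∣ m) (d : ℕ) :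
    IsCoprime (m : ℤ) ((p ^ d : ℕ) : ℤ) :=
  Nat.isCoprime_iff_coprime.mpr ((hp.coprime_iff_not_dvd.mpr h).symm.pow_right d)

theorem isCoprime_one_sub_natCast_pow {p m : ℕ} (h : p ∣ m) (d : ℕ) :
    IsCoprime (1 - m : ℤ) ((p ^ d : ℕ) : ℤ) := by
  obtain ⟨c, rfl⟩ := h
  push_cast
  exact IsCoprime.pow_right ⟨1, c, by ring⟩

/-- The sum of the coordinates. -/
def coordSum (ι : Type*) [Fintype ι] : Multiplicative (ι → ℤ) →* Multiplicative ℤ :=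
  AddMonoidHom.toMultiplicative (∑ i, Pi.evalAddMonoidHom (fun _ : ι => ℤ) i)

theorem toAdd_coordSum {ι : Type*} [Fintype ι] (v : Multiplicative (ι → ℤ)) :
    (coordSum ι v).toAdd = ∑ i, v.toAdd i := by
  simp [coordSum, AddMonoidHom.finsetSum_apply]

/-- Some product of powers of `c` and `z` has degree one, so that `x` and `y` can be moved into
the kernel of the degree. -/
theorem commute_of_isCoprime_degree {G : Type*} [Group G] {deg : G →* Multiplicative ℤ}
    (hker : ∀ x ∈ deg.ker, ∀ y ∈ deg.ker, Commute x y) {z c x y : G} (hz : ∀ g, Commute z g)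
    (hcz : IsCoprime (deg c).toAdd (deg z).toAdd) (hx : Commute c x) (hy : Commute c y) :
    Commute x y := by
  obtain ⟨u, v, huv⟩ := hcz
  let τ := c ^ u * z ^ v
  have hτ : (deg τ).toAdd = 1 := by simpa [τ] using huv
  have hcomm : ∀ {g : G}, Commute c g → Commute τ g := fun hg =>
    (hg.zpow_left u).mul_left ((hz _).zpow_left v)
  have hmem : ∀ g : G, g * τ ^ (-(deg g).toAdd) ∈ deg.ker := fun g => by
    rw [MonoidHom.mem_ker, ← toAdd_eq_zero]
    simp [hτ]
  have hsplit : ∀ g : G, g = g * τ ^ (-(deg g).toAdd) * τ ^ (deg g).toAdd := fun g => by group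
  have hpow : ∀ {g : G}, Commute c g → ∀ k l : ℤ, Commute (τ ^ k) (g * τ ^ l) := fun hg k l =>
    ((hcomm hg).mul_right ((Commute.refl τ).zpow_right l)).zpow_left k
  rw [hsplit x, hsplit y]
  exact ((hker _ (hmem x) _ (hmem y)).mul_right (hpow hx _ _).symm).mul_left
    ((hpow hy _ _).mul_right (Commute.zpow_zpow_self τ _ _))

end Degree

section Loops

variable {ι κ : Type*} [Fintype κ] {a : ι → κ → ℝ}

/-- The number of hyperplanes through a real point. -/
noncomputable def multiplicity (a : ι → κ → ℝ) (P : κ → ℝ) : ℕ := Nat.card {i // a i ⬝ᵥ P = 0}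

open Classical in
theorem sum_ite_dotProduct_eq_zero [Fintype ι] (P : κ → ℝ) (c : ℤ) :
    ∑ i, (if a i ⬝ᵥ P = 0 then c else 0) = c * multiplicity a P := by
  rw [← Finset.sum_filter, Finset.sum_const, multiplicity, Nat.card_eq_fintype_card,
    Fintype.card_subtype, nsmul_eq_mul, mul_comm]

/-- Generators and relations of the fundamental group of the complement of a complexified
arrangement, seen in a quotient `G`. The generator `loop C x` goes from the base point to
the real part `x` with imaginary part in the chamber `imBase`, and returns with imaginary part in
the chamber `C`. The field `winding` records the winding numbers around the hyperplanes. -/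
structure LoopSystem (a : ι → κ → ℝ) (G : Type*) [Group G] where
  loop : Chamber a → Chamber a → G
  imBase : Chamber a
  reBase : Chamber a
  loop_imBase : ∀ x, loop imBase x = 1
  loop_reBase : ∀ C, loop C reBase = 1
  loop_mul_inv : ∀ C D x y, Disjoint (C.sep D) (x.sep y) →
    loop C x * (loop D x)⁻¹ = loop C y * (loop D y)⁻¹
  winding : G →* Multiplicative (ι → ℤ)
  orientation : ℤˣ
  winding_loop : ∀ C x i, 4 * (winding (loop C x)).toAdd i =
    orientation * ((C.sign i - imBase.sign i) * (x.sign i - reBase.sign i))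
  closure_loop : Subgroup.closure (range (Function.uncurry loop)) = ⊤

namespace LoopSystem

variable {G : Type*} [Group G] (Δ : LoopSystem a G)

theorem eq_top_of_loop_mem {H : Subgroup G} (h : ∀ C x, Δ.loop C x ∈ H) : H = ⊤ := by
  rw [eq_top_iff, ← Δ.closure_loop, Subgroup.closure_le]
  rintro _ ⟨⟨C, x⟩, rfl⟩
  exact h C x

/-- The change of a loop with fixed imaginary chamber `C` when its real part moves from `x`
to `y`. -/
def reStep (C x y : Chamber a) : G := (Δ.loop C x)⁻¹ * Δ.loop C y

/-- The change of a loop with fixed real part `x` when its imaginary chamber moves from `D`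
to `C`. -/
def imStep (C D x : Chamber a) : G := Δ.loop C x * (Δ.loop D x)⁻¹

theorem reStep_mul_reStep (C x y z : Chamber a) :
    Δ.reStep C x y * Δ.reStep C y z = Δ.reStep C x z := by
  simp only [reStep]; group

theorem imStep_congr {C D x y : Chamber a} (h : Disjoint (C.sep D) (x.sep y)) :
    Δ.imStep C D x = Δ.imStep C D y := Δ.loop_mul_inv C D x y h

theorem reStep_congr {C D x y : Chamber a} (h : Disjoint (C.sep D) (x.sep y)) :
    Δ.reStep C x y = Δ.reStep D x y := by
  have := mul_inv_eq_iff_eq_mul.mp (Δ.loop_mul_inv C D x y h)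
  simp only [reStep]
  rw [this]; group

theorem loop_congr {C D x : Chamber a} (h : Disjoint (C.sep D) (x.sep Δ.reBase)) :
    Δ.loop C x = Δ.loop D x := by
  simpa [Δ.loop_reBase, mul_inv_eq_one] using Δ.loop_mul_inv C D x Δ.reBase h

theorem winding_reStep (C x y : Chamber a) (i : ι) :
    4 * (Δ.winding (Δ.reStep C x y)).toAdd i =
      Δ.orientation * ((C.sign i - Δ.imBase.sign i) * (y.sign i - x.sign i)) := by
  simp only [reStep, map_mul, map_inv, toAdd_mul, toAdd_inv, Pi.add_apply, Pi.neg_apply]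
  linear_combination Δ.winding_loop C y i - Δ.winding_loop C x i

theorem winding_reStep_mul_reStep (C D x y : Chamber a) (i : ι) :
    4 * (Δ.winding (Δ.reStep C x y * Δ.reStep D y x)).toAdd i =
      Δ.orientation * ((C.sign i - D.sign i) * (y.sign i - x.sign i)) := by
  simp only [map_mul, toAdd_mul, Pi.add_apply]
  linear_combination Δ.winding_reStep C x y i + Δ.winding_reStep D y x i

theorem exists_winding_reStep_mul_reStep_eq_single [DecidableEq ι] {C D x y : Chamber a} {k : ι}
    (h : C.sep D ∩ x.sep y = {k}) :
    ∃ u : ℤˣ, (Δ.winding (Δ.reStep C x y * Δ.reStep D y x)).toAdd = Pi.single k (u : ℤ) := by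
  obtain ⟨hCD, hxy⟩ : k ∈ C.sep D ∩ x.sep y := h ▸ mem_singleton k
  have hw := Δ.winding_reStep_mul_reStep C D x y
  have key : ∀ s t : SignType, s ≠ 0 → t ≠ 0 → ∃ u : SignType, u ≠ 0 ∧
      ((s : ℤ) - (-s : SignType)) * ((t : ℤ) - (-t : SignType)) = 4 * u := by decide
  obtain ⟨u, hu, hsign⟩ := key _ _ (C.sign_ne_zero k) (y.sign_ne_zero k)
  obtain ⟨v, hv⟩ : IsUnit (u : ℤ) := by cases u <;> simp_all
  refine ⟨Δ.orientation * v, funext fun i => ?_⟩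
  have hwi := hw i
  by_cases hi : i = k
  · subst hi
    rw [sign_eq_neg_of_mem_sep (Ne.symm hCD), sign_eq_neg_of_mem_sep hxy, hsign] at hwi
    rw [Pi.single_eq_same, Units.val_mul, hv]
    lia
  · have hne : i ∉ C.sep D ∩ x.sep y := by simpa [h] using hi
    rw [Pi.single_eq_of_ne hi]
    rcases not_and_or.mp hne with hi | hi <;>
      simp only [notMem_sep.mp hi, sub_self, zero_mul, mul_zero] at hwi <;> lia

/-- The loop system with the roles of real and imaginary parts exchanged. -/
def swap : LoopSystem a G where
  loop x C := (Δ.loop C x)⁻¹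
  imBase := Δ.reBase
  reBase := Δ.imBase
  loop_imBase C := by rw [Δ.loop_reBase, inv_one]
  loop_reBase x := by rw [Δ.loop_imBase, inv_one]
  loop_mul_inv x y C D h := by simpa [reStep] using Δ.reStep_congr h.symm
  winding := Δ.winding
  orientation := -Δ.orientation
  winding_loop x C i := by
    rw [map_inv, toAdd_inv, Pi.neg_apply, Units.val_neg]
    linear_combination -Δ.winding_loop C x i
  closure_loop := by
    refine (eq_top_iff.mpr (Δ.closure_loop ▸ (Subgroup.closure_le _).mpr ?_))
    rintro _ ⟨⟨C, x⟩, rfl⟩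
    rw [Function.uncurry_apply_pair, ← inv_inv (Δ.loop C x)]
    exact inv_mem (Subgroup.subset_closure ⟨(x, C), rfl⟩)

theorem swap_imStep (C x y : Chamber a) : Δ.swap.imStep x y C = Δ.reStep C x y := by
  simp [imStep, reStep, swap]

/-! ### Local central elements -/

section FullTwist

variable [Finite ι]

/-- The full twist around `P`, read off from the real chamber `x`. -/
noncomputable def reTwist (P : κ → ℝ) (x : Chamber a) : G :=
  Δ.reStep (compose P x) x (-x) * Δ.reStep (compose P (-x)) (-x) x

/-- The full twist around `P`, read off from the imaginary chamber `C`. -/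
noncomputable def imTwist (P : κ → ℝ) (C : Chamber a) : G :=
  Δ.imStep (compose P C) (compose P (-C)) (-C) * Δ.imStep (compose P (-C)) (compose P C) C

theorem loop_mul_reTwist (P : κ → ℝ) (C x : Chamber a) :
    Δ.loop (compose P C) x * Δ.reTwist P x = Δ.imTwist P C * Δ.loop (compose P C) x := by
  have hdisj : ∀ D y : Chamber a, Disjoint ((compose P D).sep (compose P y)) (y.sep (-D)) :=
    fun D y => (disjoint_sep_sep_neg D y).mono_left (sep_compose P D y ▸ inter_subset_right)
  calc Δ.loop (compose P C) x * Δ.reTwist P x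
      = Δ.imStep (compose P C) (compose P x) x * Δ.loop (compose P x) (-x) *
          Δ.reStep (compose P (-x)) (-x) x := by
        simp only [reTwist, reStep, imStep]; group
    _ = Δ.loop (compose P C) (-C) * Δ.reStep (compose P x) (-C) (-x) *
          Δ.reStep (compose P (-x)) (-x) x := by
        rw [Δ.imStep_congr (hdisj C x)]; simp only [reStep, imStep]; group
    _ = Δ.imStep (compose P C) (compose P (-C)) (-C) *
          Δ.imStep (compose P (-C)) (compose P (-x)) (-x) * Δ.loop (compose P (-x)) x := by
        rw [Δ.reStep_congr (hdisj x (-C))]; simp only [reStep, imStep]; group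
    _ = Δ.imStep (compose P C) (compose P (-C)) (-C) * Δ.loop (compose P (-C)) C *
          Δ.reStep (compose P (-x)) C x := by
        rw [Δ.imStep_congr (hdisj (-C) (-x)), neg_neg]; simp only [reStep, imStep]; group
    _ = Δ.imTwist P C * Δ.loop (compose P C) x := by
        have h := hdisj (-x) C
        rw [neg_neg] at h
        rw [Δ.reStep_congr h]; simp only [imTwist, reStep, imStep]; group

/-- The full twist around `P`: a central element of the local group at `P`. -/
noncomputable def fullTwist (P : κ → ℝ) : G := Δ.reTwist P Δ.reBase

theorem imTwist_eq_fullTwist (P : κ → ℝ) (C : Chamber a) : Δ.imTwist P C = Δ.fullTwist P := by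
  simpa [Δ.loop_reBase, fullTwist] using (Δ.loop_mul_reTwist P C Δ.reBase).symm

theorem fullTwist_mul_loop {P : κ → ℝ} {C : Chamber a} (hC : C ∈ starAt P) (x : Chamber a) :
    Δ.fullTwist P * Δ.loop C x = Δ.loop C x * Δ.reTwist P x := by
  have hsep : (compose P C).sep C = ∅ :=
    eq_empty_of_forall_notMem fun i => notMem_sep.mpr (sign_compose_of_mem_starAt hC i)
  have hloop : Δ.loop (compose P C) x = Δ.loop C x := Δ.loop_congr (by simp [hsep])
  rw [← hloop, Δ.loop_mul_reTwist, imTwist_eq_fullTwist]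

theorem commute_fullTwist_imStep {P : κ → ℝ} {C D : Chamber a} (hC : C ∈ starAt P)
    (hD : D ∈ starAt P) (x : Chamber a) : Commute (Δ.fullTwist P) (Δ.imStep C D x) := by
  change _ * _ = _ * _
  have hD' : Δ.reTwist P x * (Δ.loop D x)⁻¹ = (Δ.loop D x)⁻¹ * Δ.fullTwist P := by
    rw [eq_inv_mul_iff_mul_eq, ← mul_assoc, ← Δ.fullTwist_mul_loop hD, mul_inv_cancel_right]
  rw [imStep, ← mul_assoc, Δ.fullTwist_mul_loop hC, mul_assoc, hD', mul_assoc]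

theorem commute_fullTwist_zero (g : G) : Commute (Δ.fullTwist 0) g := by
  have htop : Subgroup.centralizer {Δ.fullTwist 0} = ⊤ := Δ.eq_top_of_loop_mem fun C x => by
    have := Δ.commute_fullTwist_imStep (P := 0) (C := C) (D := Δ.imBase) (by simp [starAt])
      (by simp [starAt]) x
    rw [imStep, Δ.loop_imBase, inv_one, mul_one] at this
    exact Subgroup.mem_centralizer_singleton_iff.mpr this.symm
  exact (Subgroup.mem_centralizer_singleton_iff.mp (htop ▸ Subgroup.mem_top g)).symm

end FullTwist

variable [Fintype ι]

/-- The total winding number. -/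
def degree : G →* Multiplicative ℤ := (coordSum ι).comp Δ.winding

theorem toAdd_degree (g : G) : (Δ.degree g).toAdd = ∑ i, (Δ.winding g).toAdd i :=
  toAdd_coordSum _

theorem degree_fullTwist (P : κ → ℝ) :
    (Δ.degree (Δ.fullTwist P)).toAdd = -Δ.orientation * multiplicity a P := by
  classical
  rw [toAdd_degree, ← sum_ite_dotProduct_eq_zero]
  refine Finset.sum_congr rfl fun i _ => ?_
  have hw : 4 * (Δ.winding (Δ.fullTwist P)).toAdd i = _ := Δ.winding_reStep_mul_reStep _ _ _ _ i
  have key : ∀ s : SignType, s ≠ 0 → ((s : ℤ) - (-s : SignType)) * ((-s : SignType) - s) = -4 := by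
    decide
  split_ifs with h
  · rw [sign_compose_of_eq_zero h, sign_compose_of_eq_zero h, Chamber.sign_neg,
      key _ (Δ.reBase.sign_ne_zero i)] at hw
    linarith
  · rw [sign_compose_of_ne_zero h, sign_compose_of_ne_zero h, sub_self, zero_mul, mul_zero] at hw
    linarith

theorem degree_fullTwist_zero :
    (Δ.degree (Δ.fullTwist 0)).toAdd = -Δ.orientation * Fintype.card ι := by
  rw [degree_fullTwist]; simp [multiplicity]

end LoopSystem

end Loops

namespace LoopSystem

section Crossing

variable {ι κ : Type*} [Fintype κ] {a : ι → κ → ℝ} {G : Type*} [Group G] (Δ : LoopSystem a G)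

/-- The chambers all of whose loops belong to `Z`. -/
def loopsIn (Z : Subgroup G) : Set (Chamber a) := {C | ∀ x, Δ.loop C x ∈ Z}

theorem imBase_mem_loopsIn (Z : Subgroup G) : Δ.imBase ∈ Δ.loopsIn Z := fun x =>
  Δ.loop_imBase x ▸ Z.one_mem

variable {Δ} {Z : Subgroup G}

theorem reStep_mem {C : Chamber a} (hC : C ∈ Δ.loopsIn Z) (x y : Chamber a) :
    Δ.reStep C x y ∈ Z :=
  Z.mul_mem (Z.inv_mem (hC x)) (hC y)

theorem loop_mem_iff_of_reStep_mem {C x y : Chamber a} (h : Δ.reStep C x y ∈ Z) :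
    Δ.loop C x ∈ Z ↔ Δ.loop C y ∈ Z := by
  rw [← Subgroup.mul_mem_cancel_right Z h, reStep, mul_inv_cancel_left]

theorem mem_loopsIn_of_reStep_mem {C C' x x' : Chamber a} {k : ι} (hC : C ∈ Δ.loopsIn Z)
    (hCC' : C.sep C' ⊆ {k}) (hxx' : x.sep x' = {k}) (h : Δ.reStep C' x x' ∈ Z) :
    C' ∈ Δ.loopsIn Z := by
  have transfer : ∀ {y z : Chamber a}, y.sign k = z.sign k →
      (Δ.loop C' y ∈ Z ↔ Δ.loop C' z ∈ Z) := fun hyz => by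
    refine loop_mem_iff_of_reStep_mem ?_
    rw [← Δ.reStep_congr (disjoint_sep_of_subset_singleton hCC' (notMem_sep.mpr hyz))]
    exact reStep_mem hC _ _
  have hk : k ∈ x.sep x' := hxx' ▸ mem_singleton k
  have hsign : ∀ y : Chamber a, y.sign k = x.sign k ∨ y.sign k = x'.sign k := fun y =>
    or_iff_not_imp_left.mpr fun hy => sign_eq_of_mem_sep hy (Ne.symm hk)
  have hiff : ∀ y : Chamber a, Δ.loop C' y ∈ Z ↔ Δ.loop C' x ∈ Z := fun y =>
    (hsign y).elim transfer fun hy => (transfer hy).trans (loop_mem_iff_of_reStep_mem h).symm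
  have hbase : Δ.loop C' Δ.reBase ∈ Z := Δ.loop_reBase C' ▸ Z.one_mem
  exact fun y => (hiff y).mpr ((hiff _).mp hbase)

variable [Finite ι] (hind : Pairwise fun i j => LinearIndependent ℝ ![a i, a j])
include hind

theorem mem_loopsIn_of_subsingleton_sep {C C' : Chamber a} (hC : C ∈ Δ.loopsIn Z)
    (hCC' : (C.sep C').Subsingleton)
    (h : ∀ k ∈ C.sep C', ∃ D ∈ Δ.loopsIn Z, D.sign k = C'.sign k) : C' ∈ Δ.loopsIn Z := by
  rcases hCC'.eq_empty_or_singleton with hsep | ⟨k, hsep⟩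
  · exact fun x => Δ.loop_congr (C := C) (D := C') (x := x) (by simp [hsep]) ▸ hC x
  · obtain ⟨D, hD, hDC'⟩ := h k (hsep ▸ mem_singleton k)
    obtain ⟨x, x', -, hxx'⟩ := exists_sep_eq_singleton hind k Δ.reBase
    refine mem_loopsIn_of_reStep_mem hC hsep.subset hxx' ?_
    rw [← Δ.reStep_congr (disjoint_sep_of_subset_singleton hxx'.subset
      (notMem_sep.mpr hDC')).symm]
    exact reStep_mem hD x x'

theorem mem_loopsIn_of_forall_mem_sep {C C' : Chamber a} (hC : C ∈ Δ.loopsIn Z)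
    (h : ∀ k ∈ C.sep C', ∀ E : Chamber a, ∃ D ∈ Δ.loopsIn Z, D.sign k = E.sign k) :
    C' ∈ Δ.loopsIn Z :=
  gallery_induction hind (Pr := (· ∈ Δ.loopsIn Z)) (fun _ E' hsub hsep hE =>
    mem_loopsIn_of_subsingleton_sep hind hE hsub fun k hk => h k (hsep hk) E') hC

end Crossing

section Commutation

variable {ι κ : Type*} [Fintype ι] [Fintype κ] {a : ι → κ → ℝ} {G : Type*} [Group G]
  {Δ : LoopSystem a G}

theorem isUnit_degree_reStep_mul_reStep {C D x y : Chamber a} {k : ι}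
    (h : C.sep D ∩ x.sep y = {k}) :
    IsUnit (Δ.degree (Δ.reStep C x y * Δ.reStep D y x)).toAdd := by
  classical
  obtain ⟨u, hu⟩ := Δ.exists_winding_reStep_mul_reStep_eq_single h
  simp [toAdd_degree, hu, -map_mul]

variable (hker : ∀ g ∈ Δ.degree.ker, ∀ h ∈ Δ.degree.ker, Commute g h)
include hker

theorem commute_of_isCoprime_card {c g h : G}
    (hc : IsCoprime (Δ.degree c).toAdd (Fintype.card ι : ℤ)) (hg : Commute c g)
    (hh : Commute c h) : Commute g h := by
  refine commute_of_isCoprime_degree hker Δ.commute_fullTwist_zero ?_ hg hh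
  rw [degree_fullTwist_zero]
  exact (isCoprime_mul_unit_left_right Δ.orientation.isUnit.neg _ _).mpr hc

theorem commute_imStep {P : κ → ℝ} (hP : IsCoprime (multiplicity a P : ℤ) (Fintype.card ι : ℤ))
    {C D C' D' : Chamber a} (hC : C ∈ starAt P) (hD : D ∈ starAt P) (hC' : C' ∈ starAt P)
    (hD' : D' ∈ starAt P) (x x' : Chamber a) :
    Commute (Δ.imStep C D x) (Δ.imStep C' D' x') := by
  refine commute_of_isCoprime_card hker ?_ (Δ.commute_fullTwist_imStep hC hD x)
    (Δ.commute_fullTwist_imStep hC' hD' x')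
  rw [degree_fullTwist]
  exact (isCoprime_mul_unit_left_left Δ.orientation.isUnit.neg _ _).mpr hP

theorem commute_reStep {P : κ → ℝ} (hP : IsCoprime (multiplicity a P : ℤ) (Fintype.card ι : ℤ))
    {x y x' y' : Chamber a} (hx : x ∈ starAt P) (hy : y ∈ starAt P) (hx' : x' ∈ starAt P)
    (hy' : y' ∈ starAt P) (C C' : Chamber a) :
    Commute (Δ.reStep C x y) (Δ.reStep C' x' y') := by
  rw [← swap_imStep, ← swap_imStep]
  exact commute_imStep (Δ := Δ.swap) hker hP hx hy hx' hy' C C'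

theorem mem_centralizer_of_commute {t c g : G} (hc : c ∈ Subgroup.centralizer {t})
    (hdeg : IsCoprime (Δ.degree c).toAdd (Fintype.card ι : ℤ)) (hg : Commute c g) :
    g ∈ Subgroup.centralizer {t} :=
  Subgroup.mem_centralizer_singleton_iff.mpr
    (commute_of_isCoprime_card hker hdeg hg (Subgroup.mem_centralizer_singleton_iff.mp hc))

/-! ### Walking along a line inside a hyperplane -/

theorem mem_loopsIn_of_mem_starAt {j : ι} {R : Chamber a} (hR : Δ.reBase.sep R = {j}) {P : κ → ℝ}
    (hPj : a j ⬝ᵥ P = 0) (hP : IsCoprime (multiplicity a P : ℤ) (Fintype.card ι : ℤ))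
    {C D : Chamber a} (hC : C ∈ starAt P) (hD : D ∈ starAt P)
    (hDZ : D ∈ Δ.loopsIn (Subgroup.centralizer {Δ.loop (-Δ.imBase) R})) :
    C ∈ Δ.loopsIn (Subgroup.centralizer {Δ.loop (-Δ.imBase) R}) := by
  have hloop : ∀ E : Chamber a, Δ.loop (compose P E) R = Δ.loop E R := fun E =>
    Δ.loop_congr (disjoint_sep_of_subset_singleton ((sep_comm _ _).trans hR).subset
      (notMem_sep.mpr (sign_compose_of_eq_zero hPj E))).symm
  have ht : Δ.loop (-Δ.imBase) R =
      Δ.imStep (compose P (-Δ.imBase)) (compose P Δ.imBase) R := by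
    rw [imStep, hloop, hloop, Δ.loop_imBase, inv_one, mul_one]
  intro x
  have hstep : Δ.imStep C D x ∈ Subgroup.centralizer {Δ.loop (-Δ.imBase) R} :=
    Subgroup.mem_centralizer_singleton_iff.mpr (ht ▸ commute_imStep hker hP hC hD
      (compose_mem_starAt P _) (compose_mem_starAt P _) x R)
  simpa [imStep] using mul_mem hstep (hDZ x)

theorem exists_mem_loopsIn_sign_eq {j : ι} {R : Chamber a} (hR : Δ.reBase.sep R = {j})
    {P r : κ → ℝ} (hPj : a j ⬝ᵥ P = 0) (hrj : a j ⬝ᵥ r = 0) (hbase : Δ.imBase ∈ starAt P)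
    (hmult : ∀ s : ℝ, IsCoprime (multiplicity a (P + s • r) : ℤ) (Fintype.card ι : ℤ)) {k : ι}
    (hk : a k ⬝ᵥ r ≠ 0) (C : Chamber a) :
    ∃ D ∈ Δ.loopsIn (Subgroup.centralizer {Δ.loop (-Δ.imBase) R}), D.sign k = C.sign k := by
  let Q : κ → ℝ := P + (-(a k ⬝ᵥ P) / (a k ⬝ᵥ r)) • r
  have hQ : a k ⬝ᵥ Q = 0 := by
    simp only [Q, dotProduct_add, dotProduct_smul, smul_eq_mul]
    field_simp; ring
  refine ⟨compose Q C, ?_, sign_compose_of_eq_zero hQ C⟩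
  refine segment_induction (fun S hS E hE E' hE' hmem => ?_) hbase (compose_mem_starAt Q C)
    (Δ.imBase_mem_loopsIn _)
  obtain ⟨s, rfl⟩ : ∃ s : ℝ, P + s • r = S := by
    rw [segment_eq_image'] at hS
    obtain ⟨θ, -, rfl⟩ := hS
    exact ⟨θ * (-(a k ⬝ᵥ P) / (a k ⬝ᵥ r)), by simp [Q, smul_smul]⟩
  exact mem_loopsIn_of_mem_starAt hker hR (by simp [dotProduct_add, hPj, hrj]) (hmult s) hE' hE
    hmem

end Commutation

/-! ### Crossing the hyperplanes parallel to the line -/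

section Torus

variable {ι κ : Type*} [Fintype κ] {a : ι → κ → ℝ} {G : Type*} [Group G] {Δ : LoopSystem a G}

theorem commute_torus {T T' B B' x x' y y' : Chamber a} {i : ι} (hT : T.sep T' ⊆ {i})
    (hB : B.sep B' ⊆ {i}) (hx : x.sep x' ⊆ {i}) (hy : y.sep y' ⊆ {i}) (hTB : i ∉ T.sep B)
    (hTB' : i ∉ T'.sep B') (hxy : i ∉ x.sep y) (hxy' : i ∉ x'.sep y') :
    Commute (Δ.reStep T x y * Δ.reStep B y x) (Δ.reStep T x x' * Δ.reStep T' x' x) := by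
  have im : ∀ {C C' u v : Chamber a}, C.sep C' ⊆ {i} → i ∉ u.sep v →
      Δ.reStep C u v = Δ.reStep C' u v := fun h h' =>
    Δ.reStep_congr (disjoint_sep_of_subset_singleton h h')
  have re : ∀ {C C' u v : Chamber a}, u.sep v ⊆ {i} → i ∉ C.sep C' →
      Δ.reStep C u v = Δ.reStep C' u v := fun h h' =>
    Δ.reStep_congr (disjoint_sep_of_subset_singleton h h').symm
  have hx' : x'.sep x ⊆ {i} := (sep_comm _ _).trans_subset hx
  have hy' : y'.sep y ⊆ {i} := (sep_comm _ _).trans_subset hy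
  have hyx : i ∉ y.sep x := sep_comm x y ▸ hxy
  have hyx' : i ∉ y'.sep x' := sep_comm x' y' ▸ hxy'
  calc Δ.reStep T x y * Δ.reStep B y x * (Δ.reStep T x x' * Δ.reStep T' x' x)
      = Δ.reStep T x y * (Δ.reStep B y x * Δ.reStep B x x') * Δ.reStep B' x' x := by
        rw [re hx hTB, re hx' hTB']; group
    _ = Δ.reStep T x y * (Δ.reStep B y y' * Δ.reStep B y' x') * Δ.reStep B' x' x := by
        rw [reStep_mul_reStep, reStep_mul_reStep]
    _ = (Δ.reStep T x y * Δ.reStep T y y') * (Δ.reStep B' y' x' * Δ.reStep B' x' x) := by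
        rw [re hy hTB, im hB hyx']; group
    _ = (Δ.reStep T x x' * Δ.reStep T x' y') * (Δ.reStep B' y' y * Δ.reStep B' y x) := by
        simp only [reStep_mul_reStep]
    _ = Δ.reStep T x x' * (Δ.reStep T' x' y' * Δ.reStep T' y' y) * Δ.reStep B y x := by
        rw [im hT hxy', re hy' hTB', im hB hyx]; group
    _ = Δ.reStep T x x' * (Δ.reStep T' x' x * Δ.reStep T' x y) * Δ.reStep B y x := by
        rw [reStep_mul_reStep, reStep_mul_reStep]
    _ = Δ.reStep T x x' * Δ.reStep T' x' x * (Δ.reStep T x y * Δ.reStep B y x) := by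
        rw [im hT hxy]; group

variable [Fintype ι]

theorem degree_torus {q r : κ → ℝ} {i : ι} (hi : ∀ l, a l ⬝ᵥ q = 0 ∧ a l ⬝ᵥ r = 0 ↔ l = i)
    (D E : Chamber a) :
    (Δ.degree (Δ.reStep (compose r D) (compose q (compose r E)) (compose q (compose (-r) E)) *
      Δ.reStep (compose (-r) D) (compose q (compose (-r) E)) (compose q (compose r E)))).toAdd =
      Δ.orientation * (1 - multiplicity a q) := by
  classical
  have hsum : Δ.orientation * (1 - (multiplicity a q : ℤ)) = ∑ l,
      ((if a l ⬝ᵥ q = 0 then -(Δ.orientation : ℤ) else 0) +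
        if l = i then (Δ.orientation : ℤ) else 0) := by
    rw [Finset.sum_add_distrib, sum_ite_dotProduct_eq_zero, Finset.sum_ite_eq' _ i]
    simp only [Finset.mem_univ, if_true]; ring
  rw [toAdd_degree, hsum]
  refine Finset.sum_congr rfl fun l _ => ?_
  have hw := Δ.winding_reStep_mul_reStep (compose r D) (compose (-r) D)
    (compose q (compose r E)) (compose q (compose (-r) E)) l
  have key : ∀ s : SignType, s ≠ 0 → ((s : ℤ) - (-s : SignType)) * ((-s : SignType) - s) = -4 := by
    decide
  by_cases hl : l = i
  · obtain ⟨hq, hr⟩ := (hi l).mpr hl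
    simp only [sign_compose, dotProduct_neg, hr, neg_zero, if_true, sub_self, mul_zero] at hw
    simp only [hl, if_true]
    lia
  by_cases hq : a l ⬝ᵥ q = 0
  · have hr : a l ⬝ᵥ r ≠ 0 := fun hr => hl ((hi l).mp ⟨hq, hr⟩)
    simp only [sign_compose, dotProduct_neg, Left.sign_neg, neg_eq_zero, hq, hr, if_true, if_false,
      key _ (_root_.sign_ne_zero.mpr hr)] at hw
    simp only [hq, hl, if_true, if_false, add_zero]
    lia
  · simp only [sign_compose, hq, if_false, sub_self, mul_zero] at hw
    simp only [hq, hl, if_false, add_zero]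
    lia

variable (hker : ∀ g ∈ Δ.degree.ker, ∀ h ∈ Δ.degree.ker, Commute g h)
include hker

theorem reStep_mem_centralizer (hind : Pairwise fun i j => LinearIndependent ℝ ![a i, a j])
    {t : G} {q : κ → ℝ} (hq : IsCoprime (multiplicity a q : ℤ) (Fintype.card ι : ℤ)) {k : ι}
    (hk : a k ⬝ᵥ q = 0) {C : Chamber a} (hC : C ∈ Δ.loopsIn (Subgroup.centralizer {t}))
    (hCk : C.sign k = (-Δ.imBase).sign k) {x x' : Chamber a} (hx : x ∈ starAt q)
    (hx' : x' ∈ starAt q) (D : Chamber a) : Δ.reStep D x x' ∈ Subgroup.centralizer {t} := by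
  obtain ⟨y, y', -, hyy'⟩ := exists_sep_eq_singleton hind k Δ.reBase
  have hsep : (compose q y).sep (compose q y') = {k} := by
    rw [sep_compose, hyy', inter_eq_right, singleton_subset_iff]
    exact hk
  refine mem_centralizer_of_commute hker (reStep_mem hC (compose q y) (compose q y')) ?_
    (commute_reStep hker hq (compose_mem_starAt q y) (compose_mem_starAt q y') hx hx' C D)
  have hCbase : k ∈ C.sep Δ.imBase := by
    rw [Chamber.mem_sep, hCk, ne_comm, ← Chamber.mem_sep, sep_neg_self]
    trivial
  have hunit := isUnit_degree_reStep_mul_reStep (Δ := Δ)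
    ((inter_eq_right.mpr (hsep ▸ singleton_subset_iff.mpr hCbase)).trans hsep)
  simp only [reStep, Δ.loop_imBase, inv_one, mul_one] at hunit ⊢
  exact isCoprime_one_left.of_isCoprime_of_dvd_left hunit.dvd

theorem reStep_mem_centralizer_of_torus {t : G} {q r : κ → ℝ} {i : ι}
    (hi : ∀ l, a l ⬝ᵥ q = 0 ∧ a l ⬝ᵥ r = 0 ↔ l = i)
    (hq : IsCoprime (1 - multiplicity a q : ℤ) (Fintype.card ι : ℤ)) {D D' : Chamber a}
    (hD : compose r D ∈ Δ.loopsIn (Subgroup.centralizer {t}))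
    (hD' : compose (-r) D ∈ Δ.loopsIn (Subgroup.centralizer {t})) (hDD' : D.sep D' ⊆ {i})
    (E E' : Chamber a) :
    Δ.reStep (compose r D') (compose q (compose r E)) (compose q (compose r E')) ∈
      Subgroup.centralizer {t} := by
  let x (s : κ → ℝ) (E : Chamber a) := compose q (compose s E)
  have him : ∀ s, (compose s D).sep (compose s D') ⊆ {i} := fun s =>
    (sep_compose s D D').trans_subset (inter_subset_right.trans hDD')
  have hre : ∀ s, (∀ l, a l ⬝ᵥ s = 0 ↔ a l ⬝ᵥ r = 0) → (x s E).sep (x s E') ⊆ {i} := by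
    intro s hs l hl
    rw [sep_compose, sep_compose] at hl
    exact (hi l).mp ⟨hl.1, (hs l).mp hl.2.1⟩
  have hopp : ∀ F : Chamber a, i ∉ (compose r F).sep (compose (-r) F) := fun F => by
    simpa [sep_compose_neg] using ((hi i).mpr rfl).2
  have hopp' : ∀ F : Chamber a, i ∉ (x r F).sep (x (-r) F) := fun F h =>
    hopp F (((sep_compose q _ _).subset h).2)
  have hcomm := commute_torus (Δ := Δ) (him r) (him (-r)) (hre r fun l => Iff.rfl)
    (hre (-r) fun l => by simp) (hopp D) (hopp D') (hopp' E) (hopp' E')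
  have hmem := mem_centralizer_of_commute hker
    (mul_mem (reStep_mem hD _ _) (reStep_mem hD' _ _)) ?_ hcomm
  · simpa [reStep] using inv_mem ((Subgroup.mul_mem_cancel_left _ (reStep_mem hD _ _)).mp hmem)
  · rw [degree_torus hi]
    exact (isCoprime_mul_unit_left_left Δ.orientation.isUnit _ _).mpr hq

theorem compose_mem_loopsIn (hind : Pairwise fun i j => LinearIndependent ℝ ![a i, a j])
    {t : G} {p d : ℕ} (hp : p.Prime) (hcard : Fintype.card ι = p ^ d) {q r : κ → ℝ} {i k : ι}
    (hi : ∀ l, a l ⬝ᵥ q = 0 ∧ a l ⬝ᵥ r = 0 ↔ l = i) (hkq : a k ⬝ᵥ q = 0) (hkr : a k ⬝ᵥ r ≠ 0)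
    (hside : ∀ k, a k ⬝ᵥ r ≠ 0 → ∀ C : Chamber a,
      ∃ D ∈ Δ.loopsIn (Subgroup.centralizer {t}), D.sign k = C.sign k)
    {D D' : Chamber a} (hD : D ∈ Δ.loopsIn (Subgroup.centralizer {t})) (hDD' : D.sep D' ⊆ {i}) :
    compose r D' ∈ Δ.loopsIn (Subgroup.centralizer {t}) := by
  have near : ∀ s : κ → ℝ, (∀ l, a l ⬝ᵥ s ≠ 0 → a l ⬝ᵥ r ≠ 0) →
      compose s D ∈ Δ.loopsIn (Subgroup.centralizer {t}) := fun s hs => by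
    refine mem_loopsIn_of_forall_mem_sep hind hD fun l hl => hside l (hs l fun h0 => hl ?_)
    exact (sign_compose_of_eq_zero h0 D).symm
  have hT := near r fun l hl => hl
  have hB := near (-r) fun l hl => by simpa using hl
  have hxx' : (compose q (compose r Δ.reBase)).sep (compose q (compose r (-Δ.reBase))) = {i} := by
    rw [sep_compose, sep_compose, sep_neg_self, inter_univ]
    exact Set.ext hi
  refine mem_loopsIn_of_reStep_mem hT
    ((sep_compose r D D').trans_subset (inter_subset_right.trans hDD')) hxx' ?_
  by_cases hpq : p ∣ multiplicity a q
  · exact reStep_mem_centralizer_of_torus hker hi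
      (hcard ▸ isCoprime_one_sub_natCast_pow hpq d) hT hB hDD' _ _
  · obtain ⟨C, hC, hCk⟩ := hside k hkr (-Δ.imBase)
    exact reStep_mem_centralizer hker hind
      (hcard ▸ isCoprime_natCast_pow hp hpq d) hkq hC hCk (compose_mem_starAt q _)
      (compose_mem_starAt q _) _

end Torus

theorem eq_of_dotProduct_cross_eq_zero {ι : Type*} {a : ι → Fin 3 → ℝ}
    (hind : Pairwise fun i j => LinearIndependent ℝ ![a i, a j]) {i k l : ι} {r : Fin 3 → ℝ}
    (hi : a i ⬝ᵥ r = 0) (hk : a k ⬝ᵥ r ≠ 0) (hl : a l ⬝ᵥ r = 0)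
    (hlik : a l ⬝ᵥ (a i ⨯₃ a k) = 0) : l = i := by
  by_contra hli
  have hcross : a l ⨯₃ a i ≠ 0 := crossProduct_ne_zero_iff_linearIndependent.mpr (hind hli)
  have hr : r ⨯₃ (a l ⨯₃ a i) = 0 := by
    rw [cross_cross_eq_smul_sub_smul', dotProduct_comm r, hi, hl]; simp
  have hak : a k ⨯₃ (r ⨯₃ (a l ⨯₃ a i)) = -((a k ⬝ᵥ r) • (a l ⨯₃ a i)) := by
    rw [cross_cross_eq_smul_sub_smul', triple_product_permutation, hlik, dotProduct_comm r,
      zero_smul, zero_sub]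
  rw [hr, map_zero, eq_comm, neg_eq_zero] at hak
  exact (smul_eq_zero.mp hak).elim hk hcross

theorem commute_of_line {ι G : Type*} [Fintype ι] [Group G] {a : ι → Fin 3 → ℝ}
    {Δ : LoopSystem a G}
    (hker : ∀ g ∈ Δ.degree.ker, ∀ h ∈ Δ.degree.ker, Commute g h)
    (hind : Pairwise fun i j => LinearIndependent ℝ ![a i, a j]) {p d : ℕ} (hp : p.Prime)
    (hcard : Fintype.card ι = p ^ d) {j k : ι} {R : Chamber a} (hR : Δ.reBase.sep R = {j})
    {P r : Fin 3 → ℝ} (hPj : a j ⬝ᵥ P = 0) (hrj : a j ⬝ᵥ r = 0) (hrk : a k ⬝ᵥ r ≠ 0)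
    (hbase : Δ.imBase ∈ starAt P) (hmult : ∀ s : ℝ, ¬ p ∣ multiplicity a (P + s • r)) (g h : G) :
    Commute g h := by
  let t := Δ.loop (-Δ.imBase) R
  have hside : ∀ l, a l ⬝ᵥ r ≠ 0 → ∀ C : Chamber a,
      ∃ D ∈ Δ.loopsIn (Subgroup.centralizer {t}), D.sign l = C.sign l := fun l hl =>
    exists_mem_loopsIn_sign_eq hker hR hPj hrj hbase
      (fun s => hcard ▸ isCoprime_natCast_pow hp (hmult s) d) hl
  have hall : ∀ C, C ∈ Δ.loopsIn (Subgroup.centralizer {t}) := fun C => by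
    refine gallery_induction hind (Pr := (· ∈ Δ.loopsIn (Subgroup.centralizer {t})))
      (fun E E' hsub _ hE => mem_loopsIn_of_subsingleton_sep hind hE hsub fun i hi => ?_)
      (Δ.imBase_mem_loopsIn _)
    by_cases hir : a i ⬝ᵥ r = 0
    · refine ⟨compose r E', compose_mem_loopsIn hker hind hp hcard (q := a i ⨯₃ a k) (i := i)
        (fun l => ⟨fun hl => eq_of_dotProduct_cross_eq_zero hind hir hrk hl.2 hl.1, ?_⟩)
        (dot_cross_self _ _) hrk hside hE fun l hl => hsub hl hi, sign_compose_of_eq_zero hir E'⟩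
      rintro rfl
      exact ⟨dot_self_cross _ _, hir⟩
    · exact hside i hir E'
  have htop : Subgroup.centralizer {t} = ⊤ := Δ.eq_top_of_loop_mem hall
  have htg : ∀ g, Commute t g := fun g =>
    (Subgroup.mem_centralizer_singleton_iff.mp (htop ▸ Subgroup.mem_top g)).symm
  refine commute_of_isCoprime_card hker ?_ (htg g) (htg h)
  have hunit := isUnit_degree_reStep_mul_reStep (Δ := Δ) (C := -Δ.imBase) (D := Δ.imBase)
    (x := Δ.reBase) (y := R) (k := j) (by rw [hR, sep_comm, sep_neg_self, univ_inter])
  simp only [reStep, Δ.loop_imBase, Δ.loop_reBase, inv_one, one_mul, mul_one] at hunit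
  exact isCoprime_one_left.of_isCoprime_of_dvd_left hunit.dvd

end LoopSystem

/-! ### The abelianization of the kernel of the degree -/

section Abelianization

theorem nonempty_ker_coordSum_addEquiv (ι : Type*) [Fintype ι] [Nonempty ι] :
    Nonempty (Additive (coordSum ι).ker ≃+ (Fin (Fintype.card ι - 1) → ℤ)) := by
  classical
  let f : (ι → ℤ) →ₗ[ℤ] ℤ := ∑ i, LinearMap.proj i
  have hf : ∀ v, f v = ∑ i, v i := fun v => by simp [f, LinearMap.sum_apply]
  have hsurj : Function.Surjective f := fun c =>
    ⟨Pi.single (Classical.arbitrary ι) c, by simp [hf]⟩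
  have hrank : Module.finrank ℤ f.ker = Fintype.card ι - 1 := by
    have := f.ker.finrank_quotient_add_finrank
    rw [(f.quotKerEquivOfSurjective hsurj).finrank_eq, Module.finrank_self,
      Module.finrank_fintype_fun_eq_card] at this
    lia
  have hmem : ∀ v, v ∈ (coordSum ι).ker ↔ v.toAdd ∈ f.ker := fun v => by
    rw [MonoidHom.mem_ker, ← toAdd_eq_zero, toAdd_coordSum, LinearMap.mem_ker, hf]
  let e : Additive (coordSum ι).ker ≃+ f.ker :=
    { Additive.toMul.trans (Multiplicative.toAdd.subtypeEquiv hmem) with map_add' _ _ := rfl }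
  exact ⟨e.trans (Module.finBasisOfFinrankEq ℤ f.ker hrank).equivFun.toAddEquiv⟩

theorem nonempty_abelianization_comap_mulEquiv {G A : Type*} [Group G] [CommGroup A]
    {f : G →* A} (hf : Function.Surjective f) {B : Subgroup A}
    (hker : f.ker ≤ ⁅B.comap f, B.comap f⁆) :
    Nonempty (Abelianization (B.comap f) ≃* B) := by
  have hB : (f.subgroupComap B).ker = commutator (B.comap f) := by
    refine le_antisymm (fun x hx => ?_) (Abelianization.commutator_subset_ker _)
    have hxf : (x : G) ∈ f.ker := congrArg Subtype.val hx
    rw [← Subgroup.mem_map_iff_mem (Subgroup.subtype_injective _),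
      Subgroup.map_subtype_commutator]
    exact hker hxf
  exact ⟨(QuotientGroup.quotientMulEquivOfEq hB.symm).trans
    (QuotientGroup.quotientKerEquivOfSurjective _
      (f.subgroupComap_surjective_of_surjective B hf))⟩

theorem bijective_of_closure_range_eq_top {ι G : Type*} [Finite ι] [DecidableEq ι] [CommGroup G]
    {w : G →* Multiplicative (ι → ℤ)} {e : ι → G} {u : ι → ℤˣ}
    (he : Subgroup.closure (range e) = ⊤) (hw : ∀ k, (w (e k)).toAdd = Pi.single k (u k : ℤ)) :
    Function.Bijective w := by
  have := Fintype.ofFinite ι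
  have hprod : ∀ (c : ι → ℤ) (i : ι), (w (∏ k, e k ^ c k)).toAdd i = c i * u i := fun c i => by
    simp [map_prod, toAdd_prod, hw, Pi.single_apply]
  constructor
  · rw [← MonoidHom.ker_eq_bot_iff, eq_bot_iff]
    intro x hx
    obtain ⟨c, rfl⟩ := Subgroup.mem_closure_range_iff_of_fintype.mp (he ▸ Subgroup.mem_top x)
    have hc : c = 0 := funext fun i => by
      have := hprod c i
      rw [MonoidHom.mem_ker.mp hx, toAdd_one, Pi.zero_apply, eq_comm] at this
      exact (Units.mul_left_eq_zero (u i)).mp this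
    simp [hc]
  · refine fun v => ⟨∏ k, e k ^ (v.toAdd k * u k), Multiplicative.toAdd.injective ?_⟩
    ext i
    rw [hprod, mul_assoc, Int.units_coe_mul_self, mul_one]

end Abelianization

namespace LoopSystem

variable {ι κ : Type*} [Fintype κ] {a : ι → κ → ℝ} {G : Type*} [Group G] (Δ : LoopSystem a G)

theorem closure_range_reStep_eq_top [Finite ι]
    (hind : Pairwise fun i j => LinearIndependent ℝ ![a i, a j])
    {x x' : ι → Chamber a} (hxx' : ∀ k, (x k).sep (x' k) = {k}) :
    Subgroup.closure (range fun k => Δ.reStep (-Δ.imBase) (x k) (x' k)) = ⊤ := by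
  set Z := Subgroup.closure (range fun k => Δ.reStep (-Δ.imBase) (x k) (x' k))
  have hreStep : ∀ C k, Δ.reStep C (x k) (x' k) ∈ Z := fun C k => by
    have hcongr : ∀ D : Chamber a, C.sign k = D.sign k →
        Δ.reStep C (x k) (x' k) = Δ.reStep D (x k) (x' k) := fun D hCD => Δ.reStep_congr <| by
      rw [hxx' k, disjoint_singleton_right]
      exact notMem_sep.mpr hCD
    by_cases hk : C.sign k = Δ.imBase.sign k
    · rw [hcongr _ hk]
      exact reStep_mem (Δ.imBase_mem_loopsIn Z) _ _
    · rw [hcongr (-Δ.imBase) ?_]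
      · exact Subgroup.subset_closure ⟨k, rfl⟩
      · rw [Chamber.sign_neg, sign_eq_neg_of_mem_sep hk]
  refine Δ.eq_top_of_loop_mem fun C => ?_
  refine gallery_induction hind (Pr := (· ∈ Δ.loopsIn Z)) (fun D D' hDD' _ hD => ?_)
    (Δ.imBase_mem_loopsIn Z)
  obtain hsep | ⟨k, hsep⟩ := hDD'.eq_empty_or_singleton
  · exact mem_loopsIn_of_subsingleton_sep hind hD hDD' fun k hk => by simp [hsep] at hk
  · exact mem_loopsIn_of_reStep_mem hD hsep.subset (hxx' k) (hreStep D' k)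

theorem winding_bijective [Finite ι]
    (hind : Pairwise fun i j => LinearIndependent ℝ ![a i, a j])
    (hcomm : ∀ g h : G, Commute g h) : Function.Bijective Δ.winding := by
  classical
  let _ : CommGroup G := { ‹Group G› with mul_comm := fun g h => (hcomm g h).eq }
  choose x x' _ hxx' using fun k => exists_sep_eq_singleton hind k Δ.reBase
  have hsingle : ∀ k, ∃ u : ℤˣ, (Δ.winding (Δ.reStep (-Δ.imBase) (x k) (x' k))).toAdd =
      Pi.single k (u : ℤ) := fun k => by
    simpa [reStep, Δ.loop_imBase] using
      Δ.exists_winding_reStep_mul_reStep_eq_single (C := -Δ.imBase) (D := Δ.imBase)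
        (x := x k) (y := x' k) (k := k) (by rw [sep_comm, sep_neg_self, univ_inter, hxx'])
  choose u hu using hsingle
  exact bijective_of_closure_range_eq_top (Δ.closure_range_reStep_eq_top hind hxx') hu

/-- The loop system in the quotient by a subgroup of elements without winding. -/
def quotient (N : Subgroup G) [N.Normal] (hN : N ≤ Δ.winding.ker) : LoopSystem a (G ⧸ N) where
  loop C x := QuotientGroup.mk' N (Δ.loop C x)
  imBase := Δ.imBase
  reBase := Δ.reBase
  loop_imBase x := by rw [Δ.loop_imBase, map_one]
  loop_reBase C := by rw [Δ.loop_reBase, map_one]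
  loop_mul_inv C D x y h := by simp only [← map_inv, ← map_mul, Δ.loop_mul_inv C D x y h]
  winding := QuotientGroup.lift N Δ.winding hN
  orientation := Δ.orientation
  winding_loop := Δ.winding_loop
  closure_loop := by
    have : range (Function.uncurry fun C x => QuotientGroup.mk' N (Δ.loop C x)) =
        QuotientGroup.mk' N '' range (Function.uncurry Δ.loop) := by
      rw [← range_comp]; rfl
    rw [this, ← MonoidHom.map_closure, Δ.closure_loop,
      Subgroup.map_top_of_surjective _ (QuotientGroup.mk'_surjective N)]

section Degree

variable [Fintype ι]

theorem commutator_ker_degree_le_ker_winding :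
    ⁅Δ.degree.ker, Δ.degree.ker⁆ ≤ Δ.winding.ker :=
  (Subgroup.commutator_mono le_top le_top).trans
    (Abelianization.commutator_subset_ker Δ.winding)

/-- The loop system in the largest quotient in which elements of degree zero commute. -/
def degreeQuotient : LoopSystem a (G ⧸ ⁅Δ.degree.ker, Δ.degree.ker⁆) :=
  Δ.quotient _ Δ.commutator_ker_degree_le_ker_winding

theorem commute_of_mem_ker_degree_degreeQuotient :
    ∀ g ∈ Δ.degreeQuotient.degree.ker, ∀ h ∈ Δ.degreeQuotient.degree.ker, Commute g h := by
  intro g hg h hh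
  obtain ⟨g, rfl⟩ := QuotientGroup.mk_surjective g
  obtain ⟨h, rfl⟩ := QuotientGroup.mk_surjective h
  rw [← commutatorElement_eq_one_iff_commute]
  exact (QuotientGroup.eq_one_iff _).mpr (Subgroup.commutator_mem_commutator hg hh)

theorem nonempty_abelianization_ker_degree_addEquiv [Nonempty ι]
    (hind : Pairwise fun i j => LinearIndependent ℝ ![a i, a j])
    (hcomm : ∀ g h : G ⧸ ⁅Δ.degree.ker, Δ.degree.ker⁆, Commute g h) :
    Nonempty (Additive (Abelianization Δ.degree.ker) ≃+ (Fin (Fintype.card ι - 1) → ℤ)) := by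
  have hbij := Δ.degreeQuotient.winding_bijective hind hcomm
  have hsurj : Function.Surjective Δ.winding := hbij.surjective.comp QuotientGroup.mk_surjective
  have hker : Δ.winding.ker ≤ ⁅Δ.degree.ker, Δ.degree.ker⁆ := fun g hg =>
    (QuotientGroup.eq_one_iff g).mp <| hbij.injective <| hg.trans (map_one _).symm
  have hcomap : Δ.degree.ker = (coordSum ι).ker.comap Δ.winding :=
    (MonoidHom.comap_ker _ _).symm
  rw [hcomap] at hker ⊢
  obtain ⟨e⟩ := nonempty_abelianization_comap_mulEquiv hsurj hker
  obtain ⟨e'⟩ := nonempty_ker_coordSum_addEquiv ι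
  exact ⟨e.toAdditive.trans e'⟩

end Degree

end LoopSystem

/-! ### Winding numbers of nowhere vanishing functions -/

section Winding

open Path.Homotopic (Quotient)

variable {X : Type*} [TopologicalSpace X] {x y z : X}

/-- The total change of `log f` along a homotopy class of paths, computed by lifting through the
covering `exp`. -/
noncomputable def logIncrement (f : C(X, {w : ℂ // w ≠ 0})) (γ : Quotient x y) : ℂ :=
  (Complex.isCoveringMap_exp.monodromy (γ.map f)
    ⟨Complex.log (f x), Subtype.ext (Complex.exp_log (f x).2)⟩ : ℂ) - Complex.log (f x)

variable {f : C(X, {w : ℂ // w ≠ 0})}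

theorem logIncrement_mk {p : Path x y} {c d : ℂ} (L : Path c d)
    (hL : ∀ t, Complex.exp (L t) = f (p t)) : logIncrement f (.mk p) = d - c := by
  have hc : Complex.exp c = f x := by simpa using hL 0
  have h : (fun t => L t - c + Complex.log (f x)) =
      Complex.isCoveringMap_exp.liftPath (p.map f.continuous) (Complex.log (f x))
        (Subtype.ext (by simp [Complex.exp_log (f x).2])) := by
    refine (Complex.isCoveringMap_exp.eq_liftPath_iff _).2 ⟨by fun_prop, ?_, by simp⟩
    funext t
    refine Subtype.ext ?_
    simp only [Function.comp_apply, Complex.exp_add, Complex.exp_sub, hL, hc,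
      Complex.exp_log (f x).2]
    exact div_mul_cancel₀ _ (f x).2
  change Complex.isCoveringMap_exp.liftPath _ _ _ 1 - _ = _
  rw [← congrFun h 1]
  simp

theorem logIncrement_mk_of_mem_slitPlane {p : Path x y} {c : ℂ}
    (h : ∀ t, c * f (p t) ∈ Complex.slitPlane) :
    logIncrement f (.mk p) = Complex.log (c * f y) - Complex.log (c * f x) := by
  have hc : c ≠ 0 := left_ne_zero_of_mul (Complex.slitPlane_ne_zero (h 0))
  let L : Path (Complex.log (c * f x) - Complex.log c) (Complex.log (c * f y) - Complex.log c) :=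
    { toFun t := Complex.log (c * f (p t)) - Complex.log c
      continuous_toFun := (Continuous.clog (by fun_prop) h).sub continuous_const
      source' := by simp
      target' := by simp }
  rw [logIncrement_mk L, sub_sub_sub_cancel_right]
  intro t
  change Complex.exp (Complex.log _ - Complex.log c) = _
  rw [Complex.exp_sub, Complex.exp_log (Complex.slitPlane_ne_zero (h t)), Complex.exp_log hc,
    mul_div_cancel_left₀ _ hc]

theorem exists_log_lift (p : Path x y) {c : ℂ} (hc : Complex.exp c = f x) :
    ∃ L : Path c (c + logIncrement f (.mk p)), ∀ t, Complex.exp (L t) = f (p t) := by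
  have h0 : p.map f.continuous 0 = ⟨_, c.exp_ne_zero⟩ := Subtype.ext (by simp [hc])
  let M := Complex.isCoveringMap_exp.liftPath (p.map f.continuous) c h0
  have hM : ∀ t, Complex.exp (M t) = f (p t) := fun t =>
    congrArg Subtype.val (congrFun (Complex.isCoveringMap_exp.liftPath_lifts _ c h0) t)
  let L : Path c (M 1) := ⟨M, Complex.isCoveringMap_exp.liftPath_zero _ c h0, rfl⟩
  have hL : M 1 = c + logIncrement f (.mk p) := by
    rw [logIncrement_mk L hM, add_sub_cancel]
  exact ⟨L.cast rfl hL.symm, hM⟩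

theorem exp_logIncrement_mul (γ : Quotient x y) :
    Complex.exp (logIncrement f γ) * f x = f y := by
  induction γ with | mk p =>
  obtain ⟨L, hL⟩ := exists_log_lift p (Complex.exp_log (f x).2)
  simpa [Complex.exp_add, Complex.exp_log (f x).2, mul_comm] using hL 1

theorem logIncrement_refl : logIncrement f (.refl x) = 0 := by
  simpa using logIncrement_mk (p := .refl x) (.refl (Complex.log (f x)))
    fun _ => Complex.exp_log (f x).2

theorem logIncrement_trans (γ : Quotient x y) (δ : Quotient y z) :
    logIncrement f (γ.trans δ) = logIncrement f γ + logIncrement f δ := by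
  induction γ with | mk p =>
  induction δ with | mk q =>
  have hx := Complex.exp_log (f x).2
  obtain ⟨L, hL⟩ := exists_log_lift p hx
  obtain ⟨M, hM⟩ := exists_log_lift q (f := f) (c := Complex.log (f x) + logIncrement f (.mk p))
    (by rw [Complex.exp_add, hx, mul_comm, exp_logIncrement_mul])
  rw [← Path.Homotopic.Quotient.mk_trans, logIncrement_mk (L.trans M)]
  · ring
  · intro t
    simp only [Path.trans_apply]
    split_ifs
    exacts [hL _, hM _]

theorem logIncrement_symm (γ : Quotient x y) : logIncrement f γ.symm = -logIncrement f γ := by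
  have h := logIncrement_trans (f := f) γ.symm γ
  rw [Path.Homotopic.Quotient.symm_trans, logIncrement_refl] at h
  exact eq_neg_of_add_eq_zero_left h.symm

theorem logIncrement_eq_sum {ι : Type*} [Fintype ι] {f : ι → C(X, {w : ℂ // w ≠ 0})}
    {g : C(X, {w : ℂ // w ≠ 0})} (h : ∀ x, (g x : ℂ) = ∏ i, (f i x : ℂ)) (γ : Quotient x y) :
    logIncrement g γ = ∑ i, logIncrement (f i) γ := by
  induction γ with | mk p =>
  choose L hL using fun i => exists_log_lift p (Complex.exp_log (f i x).2)
  let M : Path (∑ i, Complex.log (f i x))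
      (∑ i, (Complex.log (f i x) + logIncrement (f i) (.mk p))) :=
    ⟨⟨fun t => ∑ i, L i t, by fun_prop⟩, by simp, by simp⟩
  rw [logIncrement_mk M, ← Finset.sum_sub_distrib]
  · simp
  · intro t
    change Complex.exp (∑ i, L i t) = _
    rw [Complex.exp_sum, h]
    exact Finset.prod_congr rfl fun i _ => hL i t

theorem exists_logIncrement_eq_int_mul (f : C(X, {w : ℂ // w ≠ 0})) (γ : Quotient x x) :
    ∃ k : ℤ, logIncrement f γ = k * (2 * Real.pi * Complex.I) := by
  rw [← Complex.exp_eq_one_iff]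
  exact mul_right_cancel₀ (f x).2 (by rw [exp_logIncrement_mul, one_mul])

/-- The number of turns that `f` makes around `0` along a loop. -/
noncomputable def windingNumber (f : C(X, {w : ℂ // w ≠ 0})) (γ : Quotient x x) : ℤ :=
  (exists_logIncrement_eq_int_mul f γ).choose

theorem windingNumber_mul_two_pi_I (γ : Quotient x x) :
    windingNumber f γ * (2 * Real.pi * Complex.I) = logIncrement f γ :=
  (exists_logIncrement_eq_int_mul f γ).choose_spec.symm

theorem windingNumber_eq_iff {γ : Quotient x x} {k : ℤ} :
    windingNumber f γ = k ↔ logIncrement f γ = k * (2 * Real.pi * Complex.I) := by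
  rw [← windingNumber_mul_two_pi_I, mul_left_inj' Complex.two_pi_I_ne_zero, Int.cast_inj]

/-- The winding numbers of a family of functions, as a homomorphism on the fundamental group. -/
noncomputable def windingHom {ι : Type*} (f : ι → C(X, {w : ℂ // w ≠ 0})) (x : X) :
    FundamentalGroup X x →* Multiplicative (ι → ℤ) where
  toFun γ := .ofAdd fun i => windingNumber (f i) γ
  map_one' := congrArg Multiplicative.ofAdd <| funext fun i =>
    windingNumber_eq_iff.2 (by rw [FundamentalGroup.one_def, logIncrement_refl]; simp)
  map_mul' γ δ := congrArg Multiplicative.ofAdd <| funext fun i => windingNumber_eq_iff.2 <| by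
    rw [FundamentalGroup.mul_def, logIncrement_trans, ← windingNumber_mul_two_pi_I,
      ← windingNumber_mul_two_pi_I, toAdd_ofAdd, toAdd_ofAdd, Pi.add_apply]
    push_cast
    ring

end Winding

/-! ### The fundamental group of a Milnor fiber -/

section MilnorFiber

variable {V : Type*} [TopologicalSpace V]

/-- The Milnor fiber `Q = 1` of a function `Q`. -/
def milnorFiber (Q : C(V, ℂ)) : Set V := {z | Q z = 1}

/-- The complement `Q ≠ 0` of the zero set of `Q`. -/
def nonvanishing (Q : C(V, ℂ)) : Set V := {z | Q z ≠ 0}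

/-- The inclusion of the Milnor fiber into the complement. -/
def milnorInclusion (Q : C(V, ℂ)) : C(milnorFiber Q, nonvanishing Q) :=
  ⟨inclusion fun _ (hz : Q _ = 1) => hz.trans_ne one_ne_zero, continuous_inclusion _⟩

/-- The function `Q`, as a nowhere vanishing function on the complement. -/
noncomputable def onComplement (Q : C(V, ℂ)) : C(nonvanishing Q, {w : ℂ // w ≠ 0}) :=
  ⟨fun z => ⟨Q z, z.2⟩, by fun_prop⟩

variable {Q : C(V, ℂ)}

@[simp]
theorem coe_milnorInclusion (z : milnorFiber Q) : (milnorInclusion Q z : V) = z := rfl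

theorem onComplement_milnorInclusion (z : milnorFiber Q) :
    onComplement Q (milnorInclusion Q z) = ⟨1, one_ne_zero⟩ := Subtype.ext z.2

theorem logIncrement_map_milnorInclusion {x y : milnorFiber Q}
    (γ : Path.Homotopic.Quotient x y) :
    logIncrement (onComplement Q) (γ.map (milnorInclusion Q)) = 0 := by
  induction γ with | mk p =>
  rw [← Path.Homotopic.Quotient.mk_map, logIncrement_mk (.refl 0), sub_zero]
  exact fun t => by simp [onComplement_milnorInclusion]

variable [AddCommGroup V] [Module ℂ V] {n : ℕ}

theorem exp_smul_mem_milnorFiber (hn : n ≠ 0) (hQ : ∀ (c : ℂ) z, Q (c • z) = c ^ n * Q z)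
    {L : ℂ} {z : V} (hL : Complex.exp L = Q z) : Complex.exp (-L / n) • z ∈ milnorFiber Q := by
  change Q _ = 1
  rw [hQ, ← hL, ← Complex.exp_nat_mul, ← Complex.exp_add, mul_div_cancel₀ _ (by simpa using hn),
    neg_add_cancel, Complex.exp_zero]

theorem exp_smul_mem_nonvanishing (hQ : ∀ (c : ℂ) z, Q (c • z) = c ^ n * Q z) (L : ℂ) {z : V}
    (hz : z ∈ nonvanishing Q) : Complex.exp L • z ∈ nonvanishing Q :=
  (hQ _ z).trans_ne (mul_ne_zero (pow_ne_zero _ (Complex.exp_ne_zero _)) hz)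

variable [ContinuousSMul ℂ V]

theorem exists_homotopic_map_milnorInclusion (hn : n ≠ 0)
    (hQ : ∀ (c : ℂ) z, Q (c • z) = c ^ n * Q z) {x y : milnorFiber Q}
    (p : Path (milnorInclusion Q x) (milnorInclusion Q y))
    (hp : logIncrement (onComplement Q) (.mk p) = 0) :
    ∃ q : Path x y, (q.map (milnorInclusion Q).continuous).Homotopic p := by
  obtain ⟨L, hL⟩ : ∃ L : Path (0 : ℂ) 0, ∀ t, Complex.exp (L t) = Q (p t) := by
    obtain ⟨L, hL⟩ := exists_log_lift (f := onComplement Q) p (c := 0)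
      (by simp [onComplement_milnorInclusion])
    exact ⟨L.cast rfl (by rw [hp, add_zero]), hL⟩
  let q : Path x y :=
    { toFun t := ⟨Complex.exp (-L t / n) • (p t : V), exp_smul_mem_milnorFiber hn hQ (hL t)⟩
      source' := Subtype.ext (by simp [p.source])
      target' := Subtype.ext (by simp [p.target]) }
  let H (s : I × I) : nonvanishing Q :=
    ⟨_, exp_smul_mem_nonvanishing hQ ((s.1 - 1) * L s.2 / n) (p s.2).2⟩
  refine ⟨q, ⟨⟨⟨⟨H, by fun_prop⟩, fun t => Subtype.ext ?_, fun t => Subtype.ext ?_⟩, ?_⟩⟩⟩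
  · simp [H, q]
  · simp [H]
  · rintro s t (rfl | rfl) <;> exact Subtype.ext (by simp [H])

theorem homotopic_of_map_milnorInclusion (hn : n ≠ 0)
    (hQ : ∀ (c : ℂ) z, Q (c • z) = c ^ n * Q z) {x y : milnorFiber Q} {p q : Path x y}
    (h : (p.map (milnorInclusion Q).continuous).Homotopic
      (q.map (milnorInclusion Q).continuous)) : p.Homotopic q := by
  obtain ⟨H⟩ := h
  have hconst : ∀ r : Path x y, (fun z : ℂ => (⟨_, z.exp_ne_zero⟩ : {w : ℂ // w ≠ 0})) ∘
      ContinuousMap.const I 0 =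
      (onComplement Q).comp (r.map (milnorInclusion Q).continuous).toContinuousMap := fun r =>
    funext fun t => by simp [onComplement_milnorInclusion]
  let F := H.compContinuousMap (onComplement Q)
  let K := Complex.isCoveringMap_exp.liftHomotopyRel F ⟨0, .inl rfl, rfl⟩ (hconst p) (hconst q)
  have hK : ∀ s, Complex.exp (K s) = Q (H s) := fun s =>
    congrArg Subtype.val <| congrFun (Complex.isCoveringMap_exp.liftHomotopy_lifts
      F.toContinuousMap (.const I 0)
      fun t => (F.apply_zero t).trans (congrFun (hconst p) t).symm) s
  refine ⟨⟨⟨⟨fun s => ⟨Complex.exp (-K s / n) • (H s : V),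
    exp_smul_mem_milnorFiber hn hQ (hK s)⟩, by fun_prop⟩,
    fun t => Subtype.ext ?_, fun t => Subtype.ext ?_⟩, fun s t ht => Subtype.ext ?_⟩⟩
  · simp
  · simp
  · have hK0 : K (s, t) = 0 := K.prop s t ht
    have hH : H (s, t) = _ := H.prop s t ht
    simp [hK0, hH]

theorem map_milnorInclusion_injective (hn : n ≠ 0) (hQ : ∀ (c : ℂ) z, Q (c • z) = c ^ n * Q z)
    (x : milnorFiber Q) : Function.Injective (FundamentalGroup.map (milnorInclusion Q) x) := by
  intro γ δ h
  obtain ⟨p, rfl⟩ := Path.Homotopic.Quotient.mk_surjective γ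
  obtain ⟨q, rfl⟩ := Path.Homotopic.Quotient.mk_surjective δ
  exact Path.Homotopic.Quotient.eq.2
    (homotopic_of_map_milnorInclusion hn hQ (Path.Homotopic.Quotient.exact h))

theorem mem_range_map_milnorInclusion (hn : n ≠ 0)
    (hQ : ∀ (c : ℂ) z, Q (c • z) = c ^ n * Q z) {x : milnorFiber Q}
    {γ : FundamentalGroup (nonvanishing Q) (milnorInclusion Q x)} :
    γ ∈ (FundamentalGroup.map (milnorInclusion Q) x).range ↔
      logIncrement (onComplement Q) γ.toPath = 0 := by
  refine ⟨?_, fun h => ?_⟩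
  · rintro ⟨δ, rfl⟩
    exact logIncrement_map_milnorInclusion δ
  · obtain ⟨p, rfl⟩ := Path.Homotopic.Quotient.mk_surjective γ
    obtain ⟨q, hq⟩ := exists_homotopic_map_milnorInclusion hn hQ p h
    exact ⟨.mk q, Path.Homotopic.Quotient.eq.2 hq⟩

theorem logIncrement_fundamentalGroupMulEquivOfPath {X : Type*} [TopologicalSpace X] {x y : X}
    {f : C(X, {w : ℂ // w ≠ 0})} (p : Path x y) (γ : FundamentalGroup X x) :
    logIncrement f (FundamentalGroup.fundamentalGroupMulEquivOfPath p γ).toPath =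
      logIncrement f γ.toPath := by
  change logIncrement f ((Path.Homotopic.Quotient.mk p).symm.trans
    (.trans γ (.mk p))) = _
  rw [logIncrement_trans, logIncrement_trans, logIncrement_symm]
  ring

theorem nonempty_fundamentalGroup_milnorFiber_mulEquiv (hn : n ≠ 0)
    (hQ : ∀ (c : ℂ) z, Q (c • z) = c ^ n * Q z) {x : milnorFiber Q} {y : nonvanishing Q}
    (hxy : Joined (milnorInclusion Q x) y) {K : Subgroup (FundamentalGroup (nonvanishing Q) y)}
    (hK : ∀ γ, γ ∈ K ↔ logIncrement (onComplement Q) γ.toPath = 0) :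
    Nonempty (FundamentalGroup (milnorFiber Q) x ≃* K) := by
  let e := FundamentalGroup.fundamentalGroupMulEquivOfPath hxy.somePath
  let f := e.toMonoidHom.comp (FundamentalGroup.map (milnorInclusion Q) x)
  have hf : Function.Injective f := e.injective.comp (map_milnorInclusion_injective hn hQ x)
  have hrange : f.range = K := by
    rw [MonoidHom.range_comp]
    ext γ
    obtain ⟨δ, rfl⟩ := e.surjective γ
    rw [hK, logIncrement_fundamentalGroupMulEquivOfPath, ← mem_range_map_milnorInclusion hn hQ]
    exact Subgroup.mem_map_iff_mem e.injective
  exact ⟨(MonoidHom.ofInjective hf).trans (.subgroupCongr hrange)⟩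

end MilnorFiber

/-! ### Generators of the fundamental group from an open cover -/

section Cover

open Path.Homotopic (Quotient)

variable {X K R : Type*} [TopologicalSpace X]

theorem homotopic_of_isSimplyConnected {s : Set X} (hs : IsSimplyConnected s) {x y : X}
    {p q : Path x y} (hp : ∀ t, p t ∈ s) (hq : ∀ t, q t ∈ s) : p.Homotopic q := by
  have := hs.simplyConnectedSpace
  have hx : x ∈ s := p.source ▸ hp 0
  have hy : y ∈ s := p.target ▸ hp 1
  let lift (r : Path x y) (hr : ∀ t, r t ∈ s) : Path (⟨x, hx⟩ : s) ⟨y, hy⟩ :=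
    { toFun t := ⟨r t, hr t⟩
      source' := Subtype.ext r.source
      target' := Subtype.ext r.target }
  exact (SimplyConnectedSpace.paths_homotopic (lift p hp) (lift q hq)).map
    ⟨Subtype.val, continuous_subtype_val⟩

theorem quotient_induction_of_isOpen_cover {U : K → Set X} (hU : ∀ k, IsOpen (U k))
    (hcover : ∀ z, ∃ k, z ∈ U k) {x : X} {motive : ∀ {y}, Quotient x y → Prop}
    (refl : motive (.refl x))
    (step : ∀ {y z} (γ : Quotient x y) (k : K) (p : Path y z), (∀ t, p t ∈ U k) →
      motive γ → motive (γ.trans (.mk p)))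
    {y : X} (γ : Quotient x y) : motive γ := by
  obtain ⟨c, rfl⟩ := Quotient.mk_surjective γ
  obtain ⟨t, ht0, htmono, ⟨m, htm⟩, htU⟩ := exists_monotone_Icc_subset_open_cover_unitInterval
    (fun k => (hU k).preimage c.continuous) fun s _ => mem_iUnion.2 (hcover (c s))
  have motive_cast {y z} (h : z = y) (p : Path x y) (hp : motive (.mk p)) :
      motive (.mk (p.cast rfl h)) := by
    subst h; exact hp
  let head (n : ℕ) : Path x (c (t n)) := (c.subpath 0 (t n)).cast c.source.symm rfl
  have motive_head (n : ℕ) : motive (.mk (head n)) := by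
    induction n with
    | zero =>
      have hinit : head 0 = (Path.refl x).cast rfl (by simp [ht0]) := by
        ext; simp [head, Path.subpath, ht0]
      exact hinit ▸ motive_cast _ _ refl
    | succ n ih =>
      obtain ⟨k, hk⟩ := htU n
      have hmem : ∀ s, c.subpath (t n) (t (n + 1)) s ∈ U k := fun s => by
        obtain ⟨u, hu, hus⟩ : c.subpath (t n) (t (n + 1)) s ∈ c '' Icc (t n) (t (n + 1)) :=
          c.range_subpath_of_le _ _ (htmono n.le_succ) ▸ mem_range_self s
        exact hus ▸ hk hu
      have hjoin : ((head n).trans (c.subpath (t n) (t (n + 1)))).Homotopic (head (n + 1)) :=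
        ⟨(Path.Homotopy.subpathTransSubpath c 0 (t n) (t (n + 1))).cast
          (by ext; rfl) (by ext; rfl)⟩
      have h := step _ k _ hmem ih
      rwa [← Quotient.mk_trans, Path.Homotopic.Quotient.eq.2 hjoin] at h
  have hc : (head m).cast rfl (by simp [htm m le_rfl]) = c := by
    ext; simp [head, Path.subpath, htm m le_rfl]
  exact hc ▸ motive_cast _ _ (motive_head m)

/-- An open cover by simply connected charts sharing a family of common points, such that each
path component of the intersection of two charts contains one of these points. -/
structure PointedCover (X K R : Type*) [TopologicalSpace X] where
  chart : K → Set X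
  isOpen_chart : ∀ k, IsOpen (chart k)
  isSimplyConnected_chart : ∀ k, IsSimplyConnected (chart k)
  exists_mem_chart : ∀ z, ∃ k, z ∈ chart k
  point : R → X
  point_mem_chart : ∀ k x, point x ∈ chart k
  exists_joinedIn_point : ∀ {k l z}, z ∈ chart k → z ∈ chart l →
    ∃ x, JoinedIn (chart k ∩ chart l) z (point x)

namespace PointedCover

variable (V : PointedCover X K R) {u v w : X}

/-- The homotopy class of the paths from `u` to `v` inside the chart `k`. -/
noncomputable def connect (k : K) (hu : u ∈ V.chart k) (hv : v ∈ V.chart k) : Quotient u v :=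
  .mk ((V.isSimplyConnected_chart k).isPathConnected.joinedIn u hu v hv).somePath

variable {V} {k l : K}

theorem exists_connect_eq_mk (hu : u ∈ V.chart k) (hv : v ∈ V.chart k) :
    ∃ p : Path u v, (∀ t, p t ∈ V.chart k) ∧ V.connect k hu hv = .mk p :=
  ⟨_, JoinedIn.somePath_mem _, rfl⟩

theorem connect_eq_mk (hu : u ∈ V.chart k) (hv : v ∈ V.chart k) {p : Path u v}
    (hp : ∀ t, p t ∈ V.chart k) : V.connect k hu hv = .mk p :=
  Quotient.eq.2 <| homotopic_of_isSimplyConnected (V.isSimplyConnected_chart k)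
    (JoinedIn.somePath_mem _) hp

theorem connect_self (hu : u ∈ V.chart k) : V.connect k hu hu = .refl u :=
  connect_eq_mk hu hu (p := .refl u) fun _ => hu

theorem connect_trans_connect (hu : u ∈ V.chart k) (hv : v ∈ V.chart k) (hw : w ∈ V.chart k) :
    (V.connect k hu hv).trans (V.connect k hv hw) = V.connect k hu hw := by
  refine ((connect_eq_mk hu hw (p := .trans _ _) fun t => ?_).trans (Quotient.mk_trans _ _)).symm
  rw [Path.trans_apply]
  split_ifs <;> exact JoinedIn.somePath_mem _ _

theorem connect_eq_connect_of_joinedIn (h : JoinedIn (V.chart k ∩ V.chart l) u v) :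
    V.connect k h.source_mem.1 h.target_mem.1 = V.connect l h.source_mem.2 h.target_mem.2 := by
  rw [connect_eq_mk _ _ fun t => (h.somePath_mem t).1,
    connect_eq_mk _ _ fun t => (h.somePath_mem t).2]

variable (V) in
/-- The class of the paths between two common points inside the chart `k`. -/
noncomputable def edge (k : K) (x y : R) : Quotient (V.point x) (V.point y) :=
  V.connect k (V.point_mem_chart k x) (V.point_mem_chart k y)

variable (V) in
/-- The loop at the point `b` running to the point `x` inside the chart `k₀` and back inside the
chart `k`. -/
noncomputable def loop (k₀ : K) (b : R) (k : K) (x : R) : FundamentalGroup X (V.point b) :=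
  (V.edge k₀ b x).trans (V.edge k x b)

variable {k₀ : K} {b x y z : R}

theorem edge_self : V.edge k x x = .refl (V.point x) :=
  connect_self _

theorem edge_trans_edge : (V.edge k x y).trans (V.edge k y z) = V.edge k x z :=
  connect_trans_connect _ _ _

theorem loop_self_left : V.loop k₀ b k₀ x = 1 :=
  edge_trans_edge.trans edge_self

theorem loop_self_right : V.loop k₀ b k b = 1 := by
  rw [loop, edge_self, edge_self, Quotient.trans_refl, FundamentalGroup.one_def]

theorem loop_mul_inv_loop :
    V.loop k₀ b k x * (V.loop k₀ b l x)⁻¹ = (V.edge l b x).trans (V.edge k x b) := by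
  rw [mul_inv_eq_iff_eq_mul, FundamentalGroup.mul_def, loop, loop, Quotient.trans_assoc,
    ← Quotient.trans_assoc (V.edge l x b), edge_trans_edge, edge_self, Quotient.refl_trans]

theorem loop_mul_inv_loop_eq_of_joinedIn
    (h : JoinedIn (V.chart k ∩ V.chart l) (V.point x) (V.point y)) :
    V.loop k₀ b k x * (V.loop k₀ b l x)⁻¹ = V.loop k₀ b k y * (V.loop k₀ b l y)⁻¹ := by
  have hxy : V.edge k x y = V.edge l x y := connect_eq_connect_of_joinedIn h
  rw [loop_mul_inv_loop, loop_mul_inv_loop, ← edge_trans_edge (y := y) (z := b), hxy,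
    ← edge_trans_edge (x := b) (y := x) (z := y), Quotient.trans_assoc]

theorem connect_trans_connect_mem_closure_loop {z : X} (hk : z ∈ V.chart k) (hl : z ∈ V.chart l) :
    FundamentalGroup.fromPath ((V.connect k (V.point_mem_chart k b) hk).trans
      (V.connect l hl (V.point_mem_chart l b))) ∈
        Subgroup.closure (range (Function.uncurry (V.loop k₀ b))) := by
  obtain ⟨x, hx⟩ := V.exists_joinedIn_point hk hl
  have hzx : V.connect k hk (V.point_mem_chart k x) = V.connect l hl (V.point_mem_chart l x) :=
    connect_eq_connect_of_joinedIn hx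
  have hloop : (V.connect k (V.point_mem_chart k b) hk).trans
      (V.connect l hl (V.point_mem_chart l b)) = V.loop k₀ b l x * (V.loop k₀ b k x)⁻¹ := by
    rw [loop_mul_inv_loop, edge, edge, ← connect_trans_connect hl (V.point_mem_chart l x),
      ← Quotient.trans_assoc, ← hzx, connect_trans_connect]
  rw [FundamentalGroup.fromPath, hloop]
  exact Subgroup.mul_mem _ (Subgroup.subset_closure ⟨(l, x), rfl⟩)
    (Subgroup.inv_mem _ (Subgroup.subset_closure ⟨(k, x), rfl⟩))

theorem closure_range_loop (V : PointedCover X K R) (k₀ : K) (b : R) :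
    Subgroup.closure (range (Function.uncurry (V.loop k₀ b))) = ⊤ := by
  have closed_up : ∀ {z} (γ : Quotient (V.point b) z) (k : K) (hz : z ∈ V.chart k),
      FundamentalGroup.fromPath (γ.trans (V.connect k hz (V.point_mem_chart k b))) ∈
        Subgroup.closure (range (Function.uncurry (V.loop k₀ b))) := by
    intro z γ
    refine quotient_induction_of_isOpen_cover (motive := fun {z} γ => ∀ k (hz : z ∈ V.chart k),
      FundamentalGroup.fromPath (γ.trans (V.connect k hz (V.point_mem_chart k b))) ∈
        Subgroup.closure (range (Function.uncurry (V.loop k₀ b)))) V.isOpen_chart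
      V.exists_mem_chart (fun k hz => ?_) (fun {y z} γ k p hp ih l hz => ?_) γ
    · rw [connect_self, Quotient.trans_refl]
      exact Subgroup.one_mem _
    · have hky : y ∈ V.chart k := p.source ▸ hp 0
      have hkz : z ∈ V.chart k := p.target ▸ hp 1
      rw [← connect_eq_mk hky hkz hp, ← connect_trans_connect hky (V.point_mem_chart k b) hkz,
        ← Quotient.trans_assoc, Quotient.trans_assoc _ _ (V.connect l _ _)]
      exact Subgroup.mul_mem _ (connect_trans_connect_mem_closure_loop hkz hz) (ih k hky)
  refine eq_top_iff.2 fun γ _ => ?_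
  have h := closed_up γ k₀ (V.point_mem_chart k₀ b)
  rwa [connect_self, Quotient.trans_refl] at h

end PointedCover

end Cover

/-! ### The complement of a complexified arrangement -/

section Complement

variable {ι κ : Type*} [Fintype κ] {a : ι → κ → ℝ}

/-- The complexification of the real linear form `v ⬝ᵥ ·`. -/
def linearForm (v : κ → ℝ) : (κ → ℂ) →ₗ[ℂ] ℂ :=
  dotProductBilin ℂ ℂ fun k => (v k : ℂ)

theorem re_linearForm (v : κ → ℝ) (z : κ → ℂ) :
    (linearForm v z).re = v ⬝ᵥ fun k => (z k).re := by
  simp [linearForm, dotProduct]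

theorem im_linearForm (v : κ → ℝ) (z : κ → ℂ) :
    (linearForm v z).im = v ⬝ᵥ fun k => (z k).im := by
  simp [linearForm, dotProduct]

theorem linearForm_ofReal (v x : κ → ℝ) : linearForm v (fun k => (x k : ℂ)) = (v ⬝ᵥ x : ℝ) :=
  Complex.ext (re_linearForm v _) ((im_linearForm v _).trans (dotProduct_zero v))

@[fun_prop]
theorem continuous_linearForm (v : κ → ℝ) : Continuous (linearForm v) :=
  (linearForm v).continuous_of_finiteDimensional

/-- The form of the plane `i`, rotated so as to be positive at `C` times the imaginary unit. -/
noncomputable def rotatedForm (C : Chamber a) (i : ι) : (κ → ℂ) →ₗ[ℂ] ℂ :=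
  (-Complex.I * (a i ⬝ᵥ C.1 : ℝ)) • linearForm (a i)

/-- The points with imaginary part in the chamber `C` relative to the planes whose forms take an
imaginary value: the domain of the principal branch of the logarithm of all rotated forms. -/
def starChart (C : Chamber a) : Set (κ → ℂ) := ⋂ i, rotatedForm C i ⁻¹' Complex.slitPlane

theorem mem_starChart {C : Chamber a} {z : κ → ℂ} : z ∈ starChart C ↔
    ∀ i, 0 < (a i ⬝ᵥ C.1) * (linearForm (a i) z).im ∨ (linearForm (a i) z).re ≠ 0 := by
  simp [starChart, rotatedForm, Complex.mem_slitPlane_iff, C.2]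

theorem linearForm_ne_zero_of_mem_starChart {C : Chamber a} {z : κ → ℂ} (hz : z ∈ starChart C)
    (i : ι) : linearForm (a i) z ≠ 0 := fun h => by
  simpa [h] using mem_starChart.1 hz i

theorem isOpen_starChart [Finite ι] (C : Chamber a) : IsOpen (starChart C) :=
  isOpen_iInter_of_finite fun i => Complex.isOpen_slitPlane.preimage
    ((continuous_linearForm (a i)).const_smul _)

theorem rotatedForm_I_smul (C : Chamber a) (i : ι) :
    rotatedForm C i (Complex.I • fun k => (C.1 k : ℂ)) = ((a i ⬝ᵥ C.1) ^ 2 : ℝ) := by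
  simp only [rotatedForm, LinearMap.smul_apply, map_smul, linearForm_ofReal, smul_eq_mul]
  push_cast
  linear_combination -((a i ⬝ᵥ C.1 : ℝ) : ℂ) ^ 2 * Complex.I_sq

theorem starConvex_starChart (C : Chamber a) :
    StarConvex ℝ (Complex.I • fun k => (C.1 k : ℂ)) (starChart C) :=
  starConvex_iInter fun i => StarConvex.linear_preimage ((rotatedForm C i).restrictScalars ℝ) <| by
    change StarConvex ℝ (rotatedForm C i _) _
    rw [rotatedForm_I_smul]
    exact Complex.starConvex_slitPlane (by exact_mod_cast sq_pos_of_ne_zero (C.2 i))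

theorem ofReal_mem_starChart (C x : Chamber a) : (fun k => (x.1 k : ℂ)) ∈ starChart C :=
  mem_starChart.2 fun i => .inr <| by
    rw [linearForm_ofReal]
    exact x.2 i

theorem isSimplyConnected_starChart (C : Chamber a) : IsSimplyConnected (starChart C) := by
  have := (starConvex_starChart C).contractibleSpace ⟨_, ofReal_mem_starChart C C⟩
  exact SimplyConnectedSpace.ofContractible _

theorem ne_zero_of_mem_segment_of_sign_eq {p q r : ℝ} (hpq : SignType.sign p = SignType.sign q)
    (hq : q ≠ 0) (hr : r ∈ segment ℝ p q) : r ≠ 0 := by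
  rcases hq.lt_or_gt with h | h
  · rw [sign_neg h, sign_eq_neg_one_iff] at hpq
    exact ((convex_Iio 0).segment_subset hpq h hr).ne
  · rw [sign_pos h, sign_eq_one_iff] at hpq
    exact ((convex_Ioi 0).segment_subset hpq h hr).ne'

theorem mul_pos_of_sign_eq {x y : ℝ} (h : SignType.sign x = SignType.sign y) (hy : y ≠ 0) :
    0 < x * y := by
  rw [← sign_eq_one_iff, sign_mul, h, ← sign_mul, sign_eq_one_iff]
  exact mul_self_pos.2 hy

theorem sign_add_of_sign_eq {x y : ℝ} (h : SignType.sign x = SignType.sign y) :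
    SignType.sign (x + y) = SignType.sign x := by
  simpa using sign_sum Finset.univ_nonempty (f := ![x, y]) _ fun i _ => by fin_cases i <;> simp [h]

theorem segment_subset_starChart {C x : Chamber a} {z : κ → ℂ}
    (h : ∀ i, 0 < (a i ⬝ᵥ C.1) * (linearForm (a i) z).im ∨
      SignType.sign (linearForm (a i) z).re = x.sign i) :
    segment ℝ z (fun k => (x.1 k : ℂ)) ⊆ starChart C := by
  rintro _ ⟨s, t, hs, ht, hst, rfl⟩
  have hform (i) : linearForm (a i) (s • z + t • fun k => (x.1 k : ℂ)) =
      s * linearForm (a i) z + (t * (a i ⬝ᵥ x.1) : ℝ) := by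
    rw [map_add, LinearMap.map_smul_of_tower, LinearMap.map_smul_of_tower, linearForm_ofReal]
    simp
  refine mem_starChart.2 fun i => ?_
  rw [hform]
  rcases h i with h | h
  · rcases hs.eq_or_lt with rfl | hs
    · obtain rfl : t = 1 := by linarith
      exact .inr (by simpa using x.2 i)
    · exact .inl (by simpa [mul_left_comm] using mul_pos hs h)
  · exact .inr <| ne_zero_of_mem_segment_of_sign_eq h (x.2 i) ⟨s, t, hs, ht, hst, by simp⟩

theorem exists_mem_starChart [Finite ι] (ha : ∀ i, a i ≠ 0) {z : κ → ℂ}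
    (hz : ∀ i, linearForm (a i) z ≠ 0) : ∃ C : Chamber a, z ∈ starChart C := by
  obtain ⟨η, hη⟩ := exists_forall_dotProduct_ne_zero ha
  refine ⟨compose (fun k => (z k).im) ⟨η, hη⟩, mem_starChart.2 fun i => ?_⟩
  refine or_iff_not_imp_right.2 fun hre => ?_
  have him : (linearForm (a i) z).im ≠ 0 := fun h => hz i (Complex.ext (not_not.1 hre) h)
  rw [im_linearForm] at him ⊢
  exact mul_pos_of_sign_eq (sign_compose_of_ne_zero him _) him

variable [Fintype ι]

/-- The product of the forms of an arrangement. -/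
def definingFunction (a : ι → κ → ℝ) : C(κ → ℂ, ℂ) :=
  ⟨fun z => ∏ i, linearForm (a i) z, by fun_prop⟩

theorem mem_nonvanishing_definingFunction {z : κ → ℂ} :
    z ∈ nonvanishing (definingFunction a) ↔ ∀ i, linearForm (a i) z ≠ 0 :=
  Finset.prod_ne_zero_iff.trans (by simp)

theorem starChart_subset_nonvanishing (C : Chamber a) :
    starChart C ⊆ nonvanishing (definingFunction a) := fun _ hz =>
  mem_nonvanishing_definingFunction.2 (linearForm_ne_zero_of_mem_starChart hz)

/-- A point of a chamber, as a point of the complement. -/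
def realPoint (x : Chamber a) : nonvanishing (definingFunction a) :=
  ⟨fun k => (x.1 k : ℂ), starChart_subset_nonvanishing x (ofReal_mem_starChart x x)⟩

/-- The form of the plane `i`, as a nowhere vanishing function on the complement. -/
def formOnComplement (a : ι → κ → ℝ) (i : ι) :
    C(nonvanishing (definingFunction a), {w : ℂ // w ≠ 0}) :=
  ⟨fun z => ⟨linearForm (a i) z, mem_nonvanishing_definingFunction.1 z.2 i⟩, by fun_prop⟩

theorem joinedIn_val_preimage {X : Type*} [TopologicalSpace X] {S T : Set X} (hST : S ⊆ T)
    {u v : T} (h : JoinedIn S (u : X) v) : JoinedIn (Subtype.val ⁻¹' S) u v := by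
  rw [← Topology.IsInducing.subtypeVal.joinedIn_image h.source_mem h.target_mem,
    Subtype.image_preimage_coe, inter_eq_right.2 hST]
  exact h

theorem joinedIn_realPoint_of_forall {C D x : Chamber a} {z : nonvanishing (definingFunction a)}
    (hC : ∀ i, 0 < (a i ⬝ᵥ C.1) * (linearForm (a i) z).im ∨
      SignType.sign (linearForm (a i) z).re = x.sign i)
    (hD : ∀ i, 0 < (a i ⬝ᵥ D.1) * (linearForm (a i) z).im ∨
      SignType.sign (linearForm (a i) z).re = x.sign i) :
    JoinedIn (Subtype.val ⁻¹' starChart C ∩ Subtype.val ⁻¹' starChart D) z (realPoint x) :=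
  joinedIn_val_preimage (inter_subset_left.trans (starChart_subset_nonvanishing C)) <|
    .of_segment_subset <| subset_inter (segment_subset_starChart hC) (segment_subset_starChart hD)

theorem exists_joinedIn_realPoint {C D : Chamber a} {z : nonvanishing (definingFunction a)}
    (hC : (z : κ → ℂ) ∈ starChart C) (hD : (z : κ → ℂ) ∈ starChart D) :
    ∃ x, JoinedIn (Subtype.val ⁻¹' starChart C ∩ Subtype.val ⁻¹' starChart D) z (realPoint x) := by
  let x := compose (fun k => ((z : κ → ℂ) k).re) C
  have hx (i) (h : (linearForm (a i) z).re ≠ 0) :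
      SignType.sign (linearForm (a i) z).re = x.sign i := by
    rw [re_linearForm] at h ⊢
    exact (sign_compose_of_ne_zero h C).symm
  exact ⟨x, joinedIn_realPoint_of_forall (fun i => (mem_starChart.1 hC i).imp_right (hx i))
    fun i => (mem_starChart.1 hD i).imp_right (hx i)⟩

theorem joinedIn_realPoint_realPoint {C D x y : Chamber a} (h : Disjoint (C.sep D) (x.sep y)) :
    JoinedIn (Subtype.val ⁻¹' starChart C ∩ Subtype.val ⁻¹' starChart D) (realPoint x)
      (realPoint y) := by
  let w : κ → ℂ := fun k => ⟨x.1 k + y.1 k, C.1 k⟩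
  have him (i) : (linearForm (a i) w).im = a i ⬝ᵥ C.1 := im_linearForm _ _
  have hre (i) : (linearForm (a i) w).re = a i ⬝ᵥ x.1 + a i ⬝ᵥ y.1 :=
    (re_linearForm _ _).trans (dotProduct_add _ _ _)
  have hC (i) : 0 < (a i ⬝ᵥ C.1) * (linearForm (a i) w).im :=
    (him i).symm ▸ mul_self_pos.2 (C.2 i)
  have hD (i) : 0 < (a i ⬝ᵥ D.1) * (linearForm (a i) w).im ∨ x.sign i = y.sign i := by
    by_cases hi : i ∈ C.sep D
    · exact .inr (notMem_sep.1 (h.notMem_of_mem_left hi))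
    · exact .inl (him i ▸ mul_pos_of_sign_eq (notMem_sep.1 hi).symm (C.2 i))
  let z : nonvanishing (definingFunction a) :=
    ⟨w, starChart_subset_nonvanishing C (mem_starChart.2 fun i => .inl (hC i))⟩
  have hx : JoinedIn (Subtype.val ⁻¹' starChart C ∩ Subtype.val ⁻¹' starChart D) z
      (realPoint x) :=
    joinedIn_realPoint_of_forall (fun i => .inl (hC i)) fun i => (hD i).imp_right fun hi => by
      rw [hre]; exact sign_add_of_sign_eq hi
  have hy : JoinedIn (Subtype.val ⁻¹' starChart C ∩ Subtype.val ⁻¹' starChart D) z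
      (realPoint y) :=
    joinedIn_realPoint_of_forall (fun i => .inl (hC i)) fun i => (hD i).imp_right fun hi => by
      rw [hre, add_comm]; exact sign_add_of_sign_eq hi.symm
  exact hx.symm.trans hy

/-- The cover of the complement by the star-shaped sets `starChart C`. -/
def complementCover (ha : ∀ i, a i ≠ 0) :
    PointedCover (nonvanishing (definingFunction a)) (Chamber a) (Chamber a) where
  chart C := Subtype.val ⁻¹' starChart C
  isOpen_chart C := (isOpen_starChart C).preimage continuous_subtype_val
  isSimplyConnected_chart C := by
    rw [← Topology.IsEmbedding.subtypeVal.isSimplyConnected_image, Subtype.image_preimage_coe,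
      inter_eq_right.2 (starChart_subset_nonvanishing C)]
    exact isSimplyConnected_starChart C
  exists_mem_chart z := exists_mem_starChart ha (mem_nonvanishing_definingFunction.1 z.2)
  point := realPoint
  point_mem_chart := ofReal_mem_starChart
  exists_joinedIn_point := exists_joinedIn_realPoint

theorem log_neg_I_mul_ofReal {r : ℝ} (hr : r ≠ 0) :
    Complex.log (-Complex.I * r) =
      Real.log r - SignType.sign r * (Real.pi / 2 * Complex.I) := by
  rcases hr.lt_or_gt with h | h
  · rw [show -Complex.I * r = (-r : ℝ) * Complex.I by push_cast; ring,
      Complex.log_ofReal_mul (neg_pos.2 h) Complex.I_ne_zero, Complex.log_I, Real.log_neg_eq_log,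
      sign_neg h]
    simp
  · rw [mul_comm, Complex.log_ofReal_mul h (neg_ne_zero.2 Complex.I_ne_zero), Complex.log_neg_I,
      sign_pos h]
    simp [sub_eq_add_neg]

theorem logIncrement_edge (ha : ∀ i, a i ≠ 0) (C x y : Chamber a) (i : ι) :
    logIncrement (formOnComplement a i) ((complementCover ha).edge C x y) =
      (Real.log (a i ⬝ᵥ y.1) - Real.log (a i ⬝ᵥ x.1) : ℝ) -
        C.sign i * (y.sign i - x.sign i) * (Real.pi / 2 * Complex.I) := by
  have hlog (z : Chamber a) : Complex.log (-Complex.I * (a i ⬝ᵥ C.1 : ℝ) *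
      formOnComplement a i (realPoint z)) = Real.log (a i ⬝ᵥ C.1) + Real.log (a i ⬝ᵥ z.1) -
        C.sign i * z.sign i * (Real.pi / 2 * Complex.I) := by
    have hz : (formOnComplement a i (realPoint z) : ℂ) = (a i ⬝ᵥ z.1 : ℝ) := linearForm_ofReal _ _
    rw [hz, mul_assoc, ← Complex.ofReal_mul, log_neg_I_mul_ofReal (mul_ne_zero (C.2 i) (z.2 i)),
      Real.log_mul (C.2 i) (z.2 i), sign_mul]
    simp [Chamber.sign]
  obtain ⟨p, hp, hedge⟩ := (complementCover ha).exists_connect_eq_mk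
    ((complementCover ha).point_mem_chart C x) ((complementCover ha).point_mem_chart C y)
  rw [PointedCover.edge, hedge, logIncrement_mk_of_mem_slitPlane fun t => mem_iInter.1 (hp t) i,
    show (complementCover ha).point = realPoint from rfl, hlog, hlog]
  push_cast
  ring

theorem logIncrement_loop (ha : ∀ i, a i ≠ 0) (C₀ R₀ C x : Chamber a) (i : ι) :
    logIncrement (formOnComplement a i) ((complementCover ha).loop C₀ R₀ C x) =
      (C.sign i - C₀.sign i) * (x.sign i - R₀.sign i) * (Real.pi / 2 * Complex.I) := by
  rw [PointedCover.loop, logIncrement_trans, logIncrement_edge, logIncrement_edge]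
  push_cast
  ring

/-- The loops of the cover by star charts, as a loop system in the fundamental group of the
complement. -/
noncomputable def complementLoopSystem (ha : ∀ i, a i ≠ 0) (C₀ R₀ : Chamber a) :
    LoopSystem a (FundamentalGroup (nonvanishing (definingFunction a)) (realPoint R₀)) where
  loop := (complementCover ha).loop C₀ R₀
  imBase := C₀
  reBase := R₀
  loop_imBase _ := PointedCover.loop_self_left
  loop_reBase _ := PointedCover.loop_self_right
  loop_mul_inv _ _ _ _ h :=
    PointedCover.loop_mul_inv_loop_eq_of_joinedIn (joinedIn_realPoint_realPoint h)
  winding := windingHom (formOnComplement a) _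
  orientation := 1
  winding_loop C x i := by
    have h : ((windingHom (formOnComplement a) (realPoint R₀)
        ((complementCover ha).loop C₀ R₀ C x)).toAdd i : ℂ) * (2 * Real.pi * Complex.I) = _ :=
      (windingNumber_mul_two_pi_I _).trans (logIncrement_loop ha C₀ R₀ C x i)
    have hpi : (Real.pi / 2 * Complex.I : ℂ) ≠ 0 := by simp
    rw [← Int.cast_inj (α := ℂ), ← mul_left_inj' hpi]
    simp only [Units.val_one, Int.cast_mul, Int.cast_sub, Int.cast_one, SignType.intCast_cast]
    push_cast
    linear_combination h
  closure_loop := (complementCover ha).closure_range_loop C₀ R₀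

variable {ha : ∀ i, a i ≠ 0} {C₀ R₀ : Chamber a}

theorem mem_ker_degree_complementLoopSystem
    {γ : FundamentalGroup (nonvanishing (definingFunction a)) (realPoint R₀)} :
    γ ∈ (complementLoopSystem ha C₀ R₀).degree.ker ↔
      logIncrement (onComplement (definingFunction a)) γ.toPath = 0 := by
  have hsum : logIncrement (onComplement (definingFunction a)) γ.toPath =
      ((complementLoopSystem ha C₀ R₀).degree γ).toAdd * (2 * Real.pi * Complex.I) := by
    rw [logIncrement_eq_sum (f := formOnComplement a) fun _ => rfl, LoopSystem.toAdd_degree,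
      Int.cast_sum, Finset.sum_mul]
    exact Finset.sum_congr rfl fun i _ => (windingNumber_mul_two_pi_I _).symm
  rw [hsum, mul_eq_zero, or_iff_left Complex.two_pi_I_ne_zero, Int.cast_eq_zero, toAdd_eq_zero,
    MonoidHom.mem_ker]

theorem joined_realPoint (ha : ∀ i, a i ≠ 0) (z : nonvanishing (definingFunction a))
    (x : Chamber a) : Joined z (realPoint x) := by
  obtain ⟨C, hC⟩ := (complementCover ha).exists_mem_chart z
  exact (((complementCover ha).isSimplyConnected_chart C).isPathConnected.joinedIn z hC _
    ((complementCover ha).point_mem_chart C x)).joined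

theorem definingFunction_smul (c : ℂ) (z : κ → ℂ) :
    definingFunction a (c • z) = c ^ Fintype.card ι * definingFunction a z := by
  simp [definingFunction, Finset.prod_mul_distrib]

theorem nonempty_fundamentalGroup_milnorFiber_mulEquiv_ker_degree [Nonempty ι]
    (z₀ : milnorFiber (definingFunction a)) :
    Nonempty (FundamentalGroup (milnorFiber (definingFunction a)) z₀ ≃*
      (complementLoopSystem ha C₀ R₀).degree.ker) :=
  nonempty_fundamentalGroup_milnorFiber_mulEquiv Fintype.card_ne_zero definingFunction_smul
    (joined_realPoint ha _ R₀) fun _ => mem_ker_degree_complementLoopSystem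

end Complement

/-! ### Arrangements of planes in three-space -/

section Planes

variable {ι : Type*} {a : ι → Fin 3 → ℝ}

theorem exists_eq_smul_of_dotProduct_eq_zero {u v : Fin 3 → ℝ} (huv : LinearIndependent ℝ ![u, v])
    {r x : Fin 3 → ℝ} (hr : r ≠ 0) (hur : u ⬝ᵥ r = 0) (hvr : v ⬝ᵥ r = 0) (hux : u ⬝ᵥ x = 0)
    (hvx : v ⬝ᵥ x = 0) : ∃ c : ℝ, x = c • r := by
  have hcross : u ⨯₃ v ≠ 0 := crossProduct_ne_zero_iff_linearIndependent.2 huv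
  have parallel {y : Fin 3 → ℝ} (hu : u ⬝ᵥ y = 0) (hv : v ⬝ᵥ y = 0) :
      ∃ c : ℝ, c • u ⨯₃ v = y := by
    by_contra! h
    refine crossProduct_ne_zero_iff_linearIndependent.2
      ((LinearIndependent.pair_iff' hcross).2 h) ?_
    rw [cross_cross_eq_smul_sub_smul, hu, hv]
    simp
  obtain ⟨c, rfl⟩ := parallel hux hvx
  obtain ⟨b, rfl⟩ := parallel hur hvr
  exact ⟨c / b, by rw [smul_smul, div_mul_cancel₀ c (left_ne_zero_of_smul hr)]⟩

theorem exists_eq_complex_smul_of_linearForm_eq_zero {u v : Fin 3 → ℝ}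
    (huv : LinearIndependent ℝ ![u, v]) {r : Fin 3 → ℝ} (hr : r ≠ 0) (hur : u ⬝ᵥ r = 0)
    (hvr : v ⬝ᵥ r = 0) {z : Fin 3 → ℂ} (hu : linearForm u z = 0) (hv : linearForm v z = 0) :
    ∃ c : ℂ, z = c • fun k => (r k : ℂ) := by
  obtain ⟨s, hs⟩ := exists_eq_smul_of_dotProduct_eq_zero huv hr hur hvr
    (x := fun k => (z k).re) (by rw [← re_linearForm, hu]; rfl) (by rw [← re_linearForm, hv]; rfl)
  obtain ⟨t, ht⟩ := exists_eq_smul_of_dotProduct_eq_zero huv hr hur hvr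
    (x := fun k => (z k).im) (by rw [← im_linearForm, hu]; rfl) (by rw [← im_linearForm, hv]; rfl)
  refine ⟨⟨s, t⟩, funext fun k => Complex.ext ?_ ?_⟩
  · simpa using congrFun hs k
  · simpa using congrFun ht k

theorem multiplicity_eq_card_linearForm {κ : Type*} [Fintype κ] (a : ι → κ → ℝ) (P : κ → ℝ) :
    multiplicity a P = Nat.card {i // linearForm (a i) (fun k => (P k : ℂ)) = 0} := by
  simp only [multiplicity, linearForm_ofReal, Complex.ofReal_eq_zero]

theorem exists_direction_of_unique_multiple_point [Finite ι]
    (hind : Pairwise fun i j => LinearIndependent ℝ ![a i, a j]) {p : ℕ} {j : ι} {v₀ : Fin 3 → ℂ}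
    (honly : ∀ w, w ≠ 0 → linearForm (a j) w = 0 → p ∣ Nat.card {i // linearForm (a i) w = 0} →
      ∃ c : ℂ, w = c • v₀)
    {u : Fin 3 → ℂ} (huj : linearForm (a j) u = 0)
    (hcard : 2 ≤ Nat.card {i // linearForm (a i) u = 0}) (hu : ∀ c : ℂ, u ≠ c • v₀) :
    ∃ k r, a j ⬝ᵥ r = 0 ∧ a k ⬝ᵥ r ≠ 0 ∧
      ∀ P, a j ⬝ᵥ P = 0 → p ∣ multiplicity a P → ∃ c : ℝ, P = c • r := by
  have : Nontrivial {i // linearForm (a i) u = 0} := Finite.one_lt_card_iff_nontrivial.1 hcard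
  obtain ⟨⟨k, huk⟩, hkj⟩ := exists_ne (⟨j, huj⟩ : {i // linearForm (a i) u = 0})
  replace hkj : k ≠ j := fun h => hkj (Subtype.ext h)
  have parallel {P : Fin 3 → ℝ} (hP : a j ⬝ᵥ P = 0) (hpP : p ∣ multiplicity a P) :
      ∃ c : ℂ, (fun l => (P l : ℂ)) = c • v₀ := by
    by_cases hP0 : (fun l => (P l : ℂ)) = 0
    · exact ⟨0, by rw [hP0, zero_smul]⟩
    · exact honly _ hP0 (by rw [linearForm_ofReal, hP, Complex.ofReal_zero])
        (multiplicity_eq_card_linearForm a P ▸ hpP)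
  by_cases hr : ∃ r, r ≠ 0 ∧ a j ⬝ᵥ r = 0 ∧ p ∣ multiplicity a r
  · obtain ⟨r, hr0, hjr, hpr⟩ := hr
    obtain ⟨b, hb⟩ := parallel hjr hpr
    have hb0 : b ≠ 0 := by
      rintro rfl
      exact hr0 (funext fun l => by simpa using congrFun hb l)
    refine ⟨k, r, hjr, fun hkr => ?_, fun P hjP hpP => ?_⟩
    · obtain ⟨c, hc⟩ := exists_eq_complex_smul_of_linearForm_eq_zero (hind hkj.symm) hr0 hjr hkr
        huj huk
      exact hu (c * b) (by rw [hc, hb, mul_smul])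
    · obtain ⟨c, hc⟩ := parallel hjP hpP
      have hPr : (fun l => (P l : ℂ)) = (c / b) • fun l => (r l : ℂ) := by
        rw [hc, hb, smul_smul, div_mul_cancel₀ c hb0]
      exact ⟨(c / b).re, funext fun l => by simpa using congrArg Complex.re (congrFun hPr l)⟩
  · obtain ⟨r, hjr, hne⟩ := exists_dotProduct_eq_zero_and_ne_zero hind j
    refine ⟨k, r, hjr, hne k hkj, fun P hjP hpP => ⟨0, ?_⟩⟩
    rw [zero_smul]
    exact not_imp_comm.1 (fun hP0 => ⟨P, hP0, hjP, hpP⟩) hr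

theorem not_dvd_multiplicity_cross_add_smul {p : ℕ} {j k : ι} {r : Fin 3 → ℝ}
    (hjr : a j ⬝ᵥ r = 0) (hkr : a k ⬝ᵥ r ≠ 0) (haj : a j ≠ 0)
    (honly : ∀ P, a j ⬝ᵥ P = 0 → p ∣ multiplicity a P → ∃ c : ℝ, P = c • r) (s : ℝ) :
    ¬ p ∣ multiplicity a (a j ⨯₃ r + s • r) := by
  intro hdvd
  obtain ⟨c, hc⟩ := honly _ (by simp [dotProduct_add, hjr]) hdvd
  have hcross : a j ⨯₃ r = 0 := by
    simpa [add_dotProduct] using congrArg (· ⬝ᵥ a j ⨯₃ r) hc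
  have hsq := cross_dot_cross (a j) r (a j) r
  rw [hcross, zero_dotProduct, hjr, zero_mul, sub_zero, eq_comm] at hsq
  have hr : r ≠ 0 := fun h => hkr (by rw [h, dotProduct_zero])
  exact (mul_eq_zero.1 hsq).elim (dotProduct_self_eq_zero.not.2 haj)
    (dotProduct_self_eq_zero.not.2 hr)

variable [Fintype ι]

theorem nonempty_abelianization_milnorFiber_addEquiv (ha : ∀ i, a i ≠ 0)
    (hind : Pairwise fun i j => LinearIndependent ℝ ![a i, a j]) {p d : ℕ} (hp : p.Prime)
    (hcard : Fintype.card ι = p ^ d) {j k : ι} {r : Fin 3 → ℝ} (hjr : a j ⬝ᵥ r = 0)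
    (hkr : a k ⬝ᵥ r ≠ 0)
    (honly : ∀ P, a j ⬝ᵥ P = 0 → p ∣ multiplicity a P → ∃ c : ℝ, P = c • r)
    (z₀ : milnorFiber (definingFunction a)) :
    Nonempty (Additive (Abelianization (FundamentalGroup (milnorFiber (definingFunction a)) z₀)) ≃+
      (Fin (Fintype.card ι - 1) → ℤ)) := by
  obtain ⟨η, hη⟩ := exists_forall_dotProduct_ne_zero ha
  obtain ⟨R₀, R₁, -, hR⟩ := exists_sep_eq_singleton hind j ⟨η, hη⟩
  let Δ := complementLoopSystem ha (compose (a j ⨯₃ r) R₀) R₀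
  have : Nonempty ι := ⟨j⟩
  obtain ⟨e⟩ : Nonempty (_ ≃* Δ.degree.ker) :=
    nonempty_fundamentalGroup_milnorFiber_mulEquiv_ker_degree z₀
  have hcomm (g h) : Commute g h := LoopSystem.commute_of_line (Δ := Δ.degreeQuotient)
    Δ.commute_of_mem_ker_degree_degreeQuotient hind hp hcard hR (dot_self_cross _ _) hjr hkr
    (compose_mem_starAt _ R₀) (not_dvd_multiplicity_cross_add_smul hjr hkr (ha j) honly) g h
  obtain ⟨f⟩ := Δ.nonempty_abelianization_ker_degree_addEquiv hind hcomm
  exact ⟨(MulEquiv.toAdditive e.abelianizationCongr).trans f⟩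

end Planes

end RealArrangement

open RealArrangement in
theorem milnor_fiber_homology_free_prime_power_general
    (p d : ℕ) (hp : Nat.Prime p)
    (n : ℕ) (hn : n = p ^ d)
    (a : Fin n → Fin 3 → ℝ)
    (ha : ∀ i, a i ≠ 0)
    (hind : ∀ i j : Fin n, i ≠ j → LinearIndependent ℝ ![a i, a j])
    (ℓ : Fin n → (Fin 3 → ℂ) → ℂ)
    (hℓ : ∀ i z, ℓ i z = ∑ k, (a i k : ℂ) * z k)
    (m : (Fin 3 → ℂ) → ℕ)
    (hm : ∀ v, m v = Nat.card {i : Fin n // ℓ i v = 0})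
    (F : Set (Fin 3 → ℂ)) (hF : F = {z | ∏ i, ℓ i z = 1})
    (z₀ : F)
    (j : Fin n) (v₀ : Fin 3 → ℂ)
    (honly : ∀ w : Fin 3 → ℂ, w ≠ 0 → ℓ j w = 0 → p ∣ m w → ∃ c : ℂ, w = c • v₀)
    (hother : ∃ u : Fin 3 → ℂ, u ≠ 0 ∧ ℓ j u = 0 ∧ 2 ≤ m u ∧ ∀ c : ℂ, u ≠ c • v₀) :
    Nonempty (Additive (Abelianization (FundamentalGroup F z₀)) ≃+ (Fin (p ^ d - 1) → ℤ)) := by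
  obtain rfl : ℓ = fun i z => linearForm (a i) z := funext₂ hℓ
  obtain rfl : m = fun v => Nat.card {i // linearForm (a i) v = 0} := funext hm
  obtain rfl : F = milnorFiber (definingFunction a) := hF
  have hcard : Fintype.card (Fin n) = p ^ d := (Fintype.card_fin n).trans hn
  obtain ⟨u, -, huj, hu, huv₀⟩ := hother
  obtain ⟨k, r, hjr, hkr, hreal⟩ :=
    exists_direction_of_unique_multiple_point (fun i j => hind i j) honly huj hu huv₀
  exact hcard ▸
    nonempty_abelianization_milnorFiber_addEquiv ha (fun i j => hind i j) hp hcard hjr hkr hreal z₀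

/-- Let `n = p^d` for an odd prime `p`. If every line of a
complexified-real central arrangement of `n` planes in `ℂ³` contains a multiple point of
multiplicity divisible by `p`, and some line `ker ℓⱼ` has only one multiple point of
multiplicity divisible by `p` and contains at least one other multiple point, then the
first homology of the Milnor fiber is free abelian of rank `p^d − 1`. -/
theorem milnor_fiber_homology_free_prime_power
    (p d : ℕ) (hp : Nat.Prime p) (hodd : p ≠ 2) (hd : 1 ≤ d)
    (n : ℕ) (hn : n = p ^ d)
    (a : Fin n → Fin 3 → ℝ)
    (ha : ∀ i, a i ≠ 0)
    (hind : ∀ i j : Fin n, i ≠ j → LinearIndependent ℝ ![a i, a j])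
    (ℓ : Fin n → (Fin 3 → ℂ) → ℂ)
    (hℓ : ∀ i z, ℓ i z = ∑ k, (a i k : ℂ) * z k)
    (m : (Fin 3 → ℂ) → ℕ)
    (hm : ∀ v, m v = Nat.card {i : Fin n // ℓ i v = 0})
    (F : Set (Fin 3 → ℂ)) (hF : F = {z | ∏ i, ℓ i z = 1})
    (z₀ : F)
    (hall : ∀ i : Fin n, ∃ v : Fin 3 → ℂ, v ≠ 0 ∧ ℓ i v = 0 ∧ p ∣ m v)
    (j : Fin n) (v₀ : Fin 3 → ℂ) (hv₀ : v₀ ≠ 0) (hv₀j : ℓ j v₀ = 0)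
    (honly : ∀ w : Fin 3 → ℂ, w ≠ 0 → ℓ j w = 0 → p ∣ m w → ∃ c : ℂ, w = c • v₀)
    (hother : ∃ u : Fin 3 → ℂ, u ≠ 0 ∧ ℓ j u = 0 ∧ 2 ≤ m u ∧ ∀ c : ℂ, u ≠ c • v₀) :
    Nonempty (Additive (Abelianization (FundamentalGroup F z₀)) ≃+ (Fin (p ^ d - 1) → ℤ)) :=
  milnor_fiber_homology_free_prime_power_general p d hp n hn a ha hind ℓ hℓ m hm F hF z₀ j v₀ honly
    hother
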